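/- Let n ≥ 2, k ≥ 1, 1 ≤ η < n, and set d = n + k. Let λ_{η+1+k},…,λ_{n+k} be integers with 1 ≤ λ_j ≤ n+k and λ_j ≤ j for each η+1+k ≤ j ≤ n+k. Define the n-tuple of quadratic forms on ℝ^{n+k} by Q = (ξ_1², …, ξ_η², ξ_{λ_{η+1+k}} ξ_{η+1+k}, ξ_{λ_{η+2+k}} ξ_{η+2+k}, …, ξ_{λ_{n+k}} ξ_{n+k}), and for each 1 ≤ j ≤ n+k set w_j = #{η+1+k ≤ i ≤ n+k : λ_i = j}. Assume w_j ≥ 1 for each η+1 ≤ j ≤ η+k. Define q_2 = max{ max_{1≤j≤η} w_j + 4, max_{η+1≤j≤η+k} w_j + 2, max_{η+1+k≤j≤n+k} w_j + 3 }. Then for all exponents p, q ∈ [1,∞] with q > q_2 and 1/p + (q_2 − 1)/q < 1, there exists a constant C such that ‖E^Q f‖_{L^q(ℝ^{2n+k})} ≤ C ‖f‖_{L^p([0,1]^{n+k})} for every measurable function f : [0,1]^{n+k} → ℂ. -/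

import Mathlib

open MeasureTheory
open scoped ENNReal

/-- The extension operator associated to the quadratic surface
`S_Q = {(ξ, Q ξ) : ξ ∈ [0,1]^d} ⊆ ℝ^{d+n}`. -/
noncomputable def extOp (d n : ℕ) (Q : (Fin d → ℝ) → Fin n → ℝ)
    (f : (Fin d → ℝ) → ℂ) (x : Fin (d + n) → ℝ) : ℂ :=
  ∫ ξ in Set.Icc (0 : Fin d → ℝ) 1,
    Complex.exp (2 * (Real.pi : ℂ) * Complex.I *
      ((((∑ i : Fin d, x (Fin.castAdd n i) * ξ i) +
        ∑ j : Fin n, x (Fin.natAdd d j) * Q ξ j : ℝ)) : ℂ)) * f ξ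

/-!
Each form is attached to one variable: it is either the square of that variable or its product with
an earlier variable, the parent. The parent relation makes the variables a forest, and integrating
one variable at a time turns the extension operator into an iterated one-dimensional oscillatory
integral. Its `L^q` norm is bounded by a mixed norm of `f` to which the variables are added in
breadth-first order.

* A root with no form is added by Hausdorff–Young, with reciprocal exponent `1 - 1 / q`.
* A root `ξ_i` with the form `ξ_i ^ 2` is added by the extension estimate for the planar parabola,
  with reciprocal exponent below `1 - 3 / q`.
* For a child `ξ_c` with the form `ξ_l ξ_c`, the frequencies `x_c` and `y` dual to `ξ_c` and to the
  form enter only through `x_c + y ξ_l`, that is, along a line of slope given by the parent. The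
  restricted X-ray transform passes from `L^q` in `(x_c, y)` to `L^(q/2)` in one frequency, at the
  cost of lowering the reciprocal exponent of the parent by slightly more than `1 / q`, and
  Hausdorff–Young then gives the child the reciprocal exponent `1 - 2 / q`.

Minkowski's inequality carries these estimates past the other variables; breadth-first order
ensures that the variables between parent and child have exponent at most `q / 2`, which it
requires. In the end `ξ_i` has, up to an arbitrarily small loss, the reciprocal exponent
`1 - m / q`, where `m` counts its frequencies and the forms in which it multiplies the attached
variable (possibly itself). Since `m ≤ q₂ - 1`, this exceeds `1 / p`, and Hölder on the unit cube
collapses the mixed norm to `L^p`.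
-/

open Filter Topology
open scoped FourierTransform NNReal

section LpNorm

variable {α β : Type*} [MeasurableSpace α] [MeasurableSpace β] {μ : Measure α} {ν : Measure β}
  {p q r : ℝ}

theorem measurable_eLpNorm'_right [SFinite ν] {f : α → β → ℝ≥0∞}
    (hf : Measurable (Function.uncurry f)) (p : ℝ) : Measurable fun a => eLpNorm' (f a) p ν :=
  (hf.pow_const p).lintegral_prod_right'.pow_const _

theorem eLpNorm'_mono_enorm {ε ε' : Type*} [ENorm ε] [ENorm ε'] {f : α → ε} {g : α → ε'}
    (hq : 0 ≤ q) (h : ∀ a, ‖f a‖ₑ ≤ ‖g a‖ₑ) : eLpNorm' f q μ ≤ eLpNorm' g q μ :=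
  eLpNorm'_mono_enorm_ae hq (Eventually.of_forall h)

theorem eLpNorm'_rpow_eq_lintegral {ε : Type*} [ENorm ε] (f : α → ε) (hq : 0 < q) :
    eLpNorm' f q μ ^ q = ∫⁻ a, ‖f a‖ₑ ^ q ∂μ :=
  (lintegral_rpow_enorm_eq_rpow_eLpNorm' hq).symm

theorem eLpNorm'_const_mul (f : α → ℝ≥0∞) {c : ℝ≥0∞} (hc : c ≠ ∞) (hq : 0 < q) :
    eLpNorm' (fun a => c * f a) q μ = c * eLpNorm' f q μ := by
  simp only [eLpNorm', enorm_eq_self, ENNReal.mul_rpow_of_nonneg _ _ hq.le]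
  rw [lintegral_const_mul' _ _ (ENNReal.rpow_ne_top_of_nonneg hq.le hc),
    ENNReal.mul_rpow_of_nonneg _ _ (by positivity), ← ENNReal.rpow_mul,
    mul_one_div_cancel hq.ne', ENNReal.rpow_one]

theorem eLpNorm'_ennreal_rpow (f : α → ℝ≥0∞) (p : ℝ) (hr : 0 < r) :
    eLpNorm' (fun a => f a ^ r) p μ = eLpNorm' f (p * r) μ ^ r :=
  eLpNorm'_enorm_rpow f p r hr

theorem ennreal_mul_rpow_sub_one (x : ℝ≥0∞) (hr : 1 ≤ r) : x * x ^ (r - 1) = x ^ r := by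
  conv_rhs => rw [← add_sub_cancel 1 r, ENNReal.rpow_add_of_nonneg _ _ zero_le_one (by linarith),
    ENNReal.rpow_one]

/-! ### Minkowski's integral inequality -/

-- Hölder against `g ^ (r - 1)` gives `X ^ r ≤ B * X ^ (r - 1)` for the norm `X` of `g`, and
-- finiteness of `X` lets us divide.
theorem eLpNorm'_le_lintegral_eLpNorm'_of_lintegral_rpow_ne_top [SFinite μ] [SFinite ν]
    {f : α → β → ℝ≥0∞} (hf : Measurable (Function.uncurry f)) (hr : 1 < r) {g : α → ℝ≥0∞}
    (hg : Measurable g) (hgf : ∀ a, g a ≤ ∫⁻ b, f a b ∂ν) (hfin : ∫⁻ a, g a ^ r ∂μ ≠ ∞) :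
    eLpNorm' g r μ ≤ ∫⁻ b, eLpNorm' (f · b) r μ ∂ν := by
  have hr0 : 0 < r := by linarith
  have hr1 : r - 1 ≠ 0 := by linarith
  have hconj : r.HolderConjugate (r / (r - 1)) := .conjExponent hr
  have hnorm : eLpNorm' (fun a => g a ^ (r - 1)) (r / (r - 1)) μ = eLpNorm' g r μ ^ (r - 1) := by
    rw [eLpNorm'_ennreal_rpow _ _ (by linarith), div_mul_cancel₀ _ hr1]
  have key : eLpNorm' g r μ * eLpNorm' g r μ ^ (r - 1) ≤
      (∫⁻ b, eLpNorm' (f · b) r μ ∂ν) * eLpNorm' g r μ ^ (r - 1) := by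
    calc eLpNorm' g r μ * eLpNorm' g r μ ^ (r - 1)
        = ∫⁻ a, g a ^ r ∂μ := by
          rw [ennreal_mul_rpow_sub_one _ hr.le, eLpNorm'_rpow_eq_lintegral _ hr0]
          rfl
      _ ≤ ∫⁻ a, (∫⁻ b, f a b ∂ν) * g a ^ (r - 1) ∂μ := by
          simp_rw [← ennreal_mul_rpow_sub_one _ hr.le]
          gcongr with a
          exact hgf a
      _ = ∫⁻ a, ∫⁻ b, f a b * g a ^ (r - 1) ∂ν ∂μ := by
          simp_rw [lintegral_mul_const _ (hf.of_uncurry_left (x := _))]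
      _ = ∫⁻ b, ∫⁻ a, f a b * g a ^ (r - 1) ∂μ ∂ν :=
          lintegral_lintegral_swap (hf.mul ((hg.pow_const _).comp measurable_fst)).aemeasurable
      _ ≤ ∫⁻ b, eLpNorm' (f · b) r μ * eLpNorm' g r μ ^ (r - 1) ∂ν := by
          rw [← hnorm]
          gcongr with b
          exact ENNReal.lintegral_mul_le_Lp_mul_Lq μ hconj hf.of_uncurry_right.aemeasurable
            (hg.pow_const _).aemeasurable
      _ = _ := lintegral_mul_const _ (measurable_eLpNorm'_right (f := fun b a => f a b)
          (hf.comp measurable_swap) r)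
  have hfin' : eLpNorm' g r μ ≠ ∞ := ENNReal.rpow_ne_top_of_nonneg (by positivity) hfin
  rcases eq_or_ne (eLpNorm' g r μ) 0 with h0 | h0
  · simp [h0]
  · exact (ENNReal.mul_le_mul_iff_left (by simp [ENNReal.rpow_eq_zero_iff, h0, hfin'])
      (ENNReal.rpow_ne_top_of_nonneg (by linarith) hfin')).1 key

theorem exists_monotone_tendsto_lintegral_rpow_ne_top [SigmaFinite μ] {F : α → ℝ≥0∞}
    (hF : Measurable F) (hr : 0 < r) :
    ∃ G : ℕ → α → ℝ≥0∞, Monotone G ∧ (∀ N, Measurable (G N)) ∧ (∀ N, G N ≤ F) ∧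
      (∀ a, Tendsto (fun N => G N a) atTop (𝓝 (F a))) ∧ ∀ N, ∫⁻ a, G N a ^ r ∂μ ≠ ∞ := by
  obtain ⟨h, hpos, hm, hint⟩ := exists_pos_lintegral_lt_of_sigmaFinite μ one_ne_zero
  refine ⟨fun N a => min (F a) (N * (h a : ℝ≥0∞) ^ (1 / r)), fun N M hNM a => ?_,
    fun N => hF.min ((hm.coe_nnreal_ennreal.pow_const _).const_mul _),
    fun N a => min_le_left _ _, fun a => ?_, fun N => ?_⟩
  · dsimp only
    gcongr
  · have hne : (h a : ℝ≥0∞) ^ (1 / r) ≠ 0 := by simp [ENNReal.rpow_eq_zero_iff, (hpos a).ne', hr]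
    have := (tendsto_const_nhds (x := F a)).min (ENNReal.Tendsto.mul_const
      (b := (h a : ℝ≥0∞) ^ (1 / r)) ENNReal.tendsto_nat_nhds_top (.inl ENNReal.top_ne_zero))
    rwa [ENNReal.top_mul hne, min_eq_left le_top] at this
  · refine ne_top_of_le_ne_top (b := ∫⁻ a, (N : ℝ≥0∞) ^ r * h a ∂μ) ?_ (lintegral_mono fun a => ?_)
    · rw [lintegral_const_mul _ hm.coe_nnreal_ennreal]
      exact ENNReal.mul_ne_top (by finiteness) (hint.trans ENNReal.one_lt_top).ne
    · calc min (F a) (N * (h a : ℝ≥0∞) ^ (1 / r)) ^ r ≤ (N * (h a : ℝ≥0∞) ^ (1 / r)) ^ r := by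
            gcongr
            exact min_le_right _ _
        _ = N ^ r * h a := by
          rw [ENNReal.mul_rpow_of_nonneg _ _ hr.le, ← ENNReal.rpow_mul, one_div_mul_cancel hr.ne',
            ENNReal.rpow_one]

theorem eLpNorm'_lintegral_le_lintegral_eLpNorm' [SigmaFinite μ] [SFinite ν] {f : α → β → ℝ≥0∞}
    (hf : Measurable (Function.uncurry f)) (hr : 1 ≤ r) :
    eLpNorm' (fun a => ∫⁻ b, f a b ∂ν) r μ ≤ ∫⁻ b, eLpNorm' (f · b) r μ ∂ν := by
  rcases hr.eq_or_lt with rfl | hr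
  · simp only [eLpNorm', enorm_eq_self, ENNReal.rpow_one, div_one]
    rw [lintegral_lintegral_swap hf.aemeasurable]
  have hr0 : 0 < r := by linarith
  obtain ⟨G, hmono, hG, hle, hlim, hfin⟩ :=
    exists_monotone_tendsto_lintegral_rpow_ne_top (μ := μ) (hf.lintegral_prod_right' (ν := ν)) hr0
  have hnorm : Tendsto (fun N => eLpNorm' (G N) r μ) atTop
      (𝓝 (eLpNorm' (fun a => ∫⁻ b, f a b ∂ν) r μ)) :=
    (lintegral_tendsto_of_tendsto_of_monotone (fun N => ((hG N).pow_const r).aemeasurable)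
      (.of_forall fun a N M hNM => ENNReal.rpow_le_rpow (hmono hNM a) hr0.le)
      (.of_forall fun a => (hlim a).ennrpow_const r)).ennrpow_const _
  exact le_of_tendsto' hnorm fun N =>
    eLpNorm'_le_lintegral_eLpNorm'_of_lintegral_rpow_ne_top hf hr (hG N) (hle N) (hfin N)

theorem eLpNorm'_eLpNorm'_le_swap [SigmaFinite μ] [SFinite ν] {f : α → β → ℝ≥0∞}
    (hf : Measurable (Function.uncurry f)) (hp : 0 < p) (hpq : p ≤ q) :
    eLpNorm' (fun a => eLpNorm' (f a) p ν) q μ ≤ eLpNorm' (fun b => eLpNorm' (f · b) q μ) p ν := by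
  have h := eLpNorm'_lintegral_le_lintegral_eLpNorm' (μ := μ) (ν := ν)
    (f := fun a b => f a b ^ p) (hf.pow_const p) ((one_le_div hp).2 hpq)
  have hq : q / p * p = q := div_mul_cancel₀ _ hp.ne'
  simp only [eLpNorm'_ennreal_rpow _ _ hp, hq] at h
  rw [← ENNReal.rpow_le_rpow_iff hp, eLpNorm'_rpow_eq_lintegral _ hp]
  refine le_of_eq_of_le ?_ h
  rw [← hq, ← eLpNorm'_ennreal_rpow _ _ hp, hq]
  simp only [eLpNorm'_rpow_eq_lintegral _ hp, enorm_eq_self]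

end LpNorm

/-! ### Plancherel and Hausdorff–Young -/

section LayerCake

variable {α F : Type*} [MeasurableSpace α] {μ : Measure α} [NormedAddCommGroup F] {f : α → F}
  {b t : ℝ}

theorem lintegral_Ioo_rpow {c A : ℝ} (hc : -1 < c) (hA : 0 ≤ A) :
    ∫⁻ t in Set.Ioo 0 A, ENNReal.ofReal (t ^ c) = ENNReal.ofReal (A ^ (c + 1) / (c + 1)) := by
  rw [restrict_Ioo_eq_restrict_Ioc, ← ofReal_integral_eq_lintegral_ofReal]
  · rw [← intervalIntegral.integral_of_le hA, integral_rpow (Or.inl hc),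
      Real.zero_rpow (by linarith), sub_zero]
  · rw [← IntegrableOn, ← intervalIntegrable_iff_integrableOn_Ioc_of_le hA]
    exact intervalIntegral.intervalIntegrable_rpow' hc
  · filter_upwards [self_mem_ae_restrict measurableSet_Ioc] with t ht
    exact Real.rpow_nonneg ht.1.le _

theorem lintegral_Ioi_indicator_rpow_mul [SFinite μ] (hb : 2 < b) {A : α → ℝ} (hA : Measurable A)
    (hA0 : ∀ v, 0 ≤ A v) {h : α → ℝ≥0∞}
    (hh : AEMeasurable h μ) :
    ∫⁻ t in Set.Ioi (0 : ℝ), ENNReal.ofReal (t ^ (b - 3)) * ∫⁻ v in {v | t < A v}, h v ∂μ =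
      ∫⁻ v, ENNReal.ofReal (A v ^ (b - 2) / (b - 2)) * h v ∂μ := by
  have hS : ∀ t, MeasurableSet {v | t < A v} := fun t => measurableSet_lt measurable_const hA
  have hmeas : AEMeasurable (Function.uncurry fun t v =>
      ENNReal.ofReal (t ^ (b - 3)) * {v | t < A v}.indicator h v)
      ((volume.restrict (Set.Ioi 0)).prod μ) :=
    (by fun_prop : Measurable fun z : ℝ × α => ENNReal.ofReal (z.1 ^ (b - 3))).aemeasurable.mul
      (hh.comp_snd.indicator (measurableSet_lt measurable_fst (hA.comp measurable_snd)))
  simp only [← lintegral_const_mul' _ _ ENNReal.ofReal_ne_top, ← lintegral_indicator (hS _)]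
  rw [lintegral_lintegral_swap hmeas]
  refine lintegral_congr fun v => ?_
  rw [show b - 2 = b - 3 + 1 by ring, ← lintegral_Ioo_rpow (by linarith) (hA0 v),
    ← lintegral_mul_const _ (by fun_prop), ← Set.Ioi_inter_Iio, Set.inter_comm,
    ← setLIntegral_indicator measurableSet_Iio]
  refine lintegral_congr fun t => ?_
  by_cases ht : t < A v <;> simp [ht]

theorem setLIntegral_enorm_le_of_rpow_le {r M : ℝ} (hfm : StronglyMeasurable f) (hr : 1 < r)
    (hM : ∫⁻ v, ‖f v‖ₑ ^ r ∂μ = ENNReal.ofReal M) (hM0 : 0 ≤ M) (ht : 0 < t) :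
    ∫⁻ v in {v | 2 * M * ‖f v‖ ^ (1 - r) ≤ t}, ‖f v‖ₑ ∂μ ≤ ENNReal.ofReal (t / 2) := by
  have hmeas : Measurable fun v => ‖f v‖ₑ ^ r := hfm.enorm.pow_const r
  have hfn : Measurable fun v => ‖f v‖ := hfm.norm.measurable
  rcases hM0.eq_or_lt with rfl | hM0
  · rw [ENNReal.ofReal_zero, lintegral_eq_zero_iff hmeas] at hM
    refine (setLIntegral_le_lintegral _ _).trans ?_
    rw [lintegral_congr_ae (hM.mono fun v hv => (ENNReal.rpow_eq_zero_iff_of_pos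
      (by linarith)).1 hv), lintegral_zero]
    exact zero_le
  · calc ∫⁻ v in {v | 2 * M * ‖f v‖ ^ (1 - r) ≤ t}, ‖f v‖ₑ ∂μ
        ≤ ∫⁻ v, ENNReal.ofReal (t / (2 * M)) * ‖f v‖ₑ ^ r ∂μ := by
          refine (setLIntegral_mono' (measurableSet_le (by fun_prop) measurable_const)
            fun v (hv : _ ≤ t) => ?_).trans (setLIntegral_le_lintegral _ _)
          rcases eq_or_ne (f v) 0 with h0 | h0
          · simp [h0]
          have hpos : 0 < ‖f v‖ := norm_pos_iff.2 h0
          rw [← ofReal_norm, ENNReal.ofReal_rpow_of_pos hpos,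
            ← ENNReal.ofReal_mul (by positivity)]
          gcongr
          calc ‖f v‖ = ‖f v‖ ^ (1 - r) * ‖f v‖ ^ r := by
                rw [← Real.rpow_add hpos, sub_add_cancel, Real.rpow_one]
            _ ≤ t / (2 * M) * ‖f v‖ ^ r := by
                gcongr
                rw [le_div_iff₀ (by positivity)]
                linarith
      _ = ENNReal.ofReal (t / 2) := by
          rw [lintegral_const_mul _ hmeas, hM, ← ENNReal.ofReal_mul (by positivity)]
          congr 1
          field_simp

end LayerCake

section Fourier

variable {V F : Type*} [NormedAddCommGroup V] [InnerProductSpace ℝ V] [FiniteDimensional ℝ V]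
  [MeasurableSpace V] [BorelSpace V] [NormedAddCommGroup F] [InnerProductSpace ℂ F]
  {f : V → F} {S : Set V} {b p t : ℝ}

theorem continuous_fourier (hf : Integrable f) : Continuous (𝓕 f) :=
  VectorFourier.fourierIntegral_continuous Real.continuous_fourierChar
    (L := innerₗ V) continuous_inner hf

theorem enorm_fourier_le_lintegral (f : V → F) (w : V) : ‖𝓕 f w‖ₑ ≤ ∫⁻ v, ‖f v‖ₑ := by
  rw [Real.fourier_eq]
  exact (enorm_integral_le_lintegral_enorm _).trans_eq
    (by simp only [enorm_eq_nnnorm, nnnorm, Circle.norm_smul])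

theorem fourier_indicator_add_compl (hf : Integrable f) (hS : MeasurableSet S) (w : V) :
    𝓕 f w = 𝓕 (S.indicator f) w + 𝓕 (Sᶜ.indicator f) w := by
  conv_lhs => rw [← Set.indicator_self_add_compl S f]
  exact congrFun (VectorFourier.fourierIntegral_add Real.continuous_fourierChar
    (L := innerₗ V) continuous_inner (hf.indicator hS) (hf.indicator hS.compl)) w

variable [CompleteSpace F]

-- Both sides define the same tempered distribution.
theorem fourier_toLp_ae_eq (hf : Integrable f) (hf2 : MemLp f 2) :
    (𝓕 (hf2.toLp f) : Lp F 2 (volume : Measure V)) =ᵐ[volume] 𝓕 f := by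
  refine ae_eq_of_integral_contDiff_smul_eq ((Lp.memLp _).locallyIntegrable (by norm_num))
    (continuous_fourier hf).locallyIntegrable fun φ hφ hφc => ?_
  have hφc' : HasCompactSupport (Complex.ofRealCLM ∘ φ) := hφc.comp_left rfl
  have hφ' : ContDiff ℝ (⊤ : ℕ∞) (Complex.ofRealCLM ∘ φ) := by fun_prop
  let ψ : SchwartzMap V ℂ := hφc'.toSchwartzMap hφ'
  have hψ : ∀ x, ψ x = (φ x : ℂ) := fun x => rfl
  calc ∫ x, φ x • (𝓕 (hf2.toLp f) : Lp F 2 (volume : Measure V)) x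
      = Lp.toTemperedDistribution (𝓕 (hf2.toLp f) : Lp F 2 (volume : Measure V)) ψ := by
        simp only [Lp.toTemperedDistribution_apply, hψ, Complex.coe_smul]
    _ = ∫ x, (𝓕 ψ) x • f x := by
        rw [← Lp.fourier_toTemperedDistribution_eq, TemperedDistribution.fourier_apply,
          Lp.toTemperedDistribution_apply]
        refine integral_congr_ae ?_
        filter_upwards [hf2.coeFn_toLp] with x hx
        rw [hx]
    _ = ∫ x, ψ x • 𝓕 f x := by
        have := VectorFourier.integral_fourierIntegral_smul_eq_flip (L := innerₗ V)
          Real.continuous_fourierChar continuous_inner (ψ.integrable (μ := volume)) hf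
        simpa using! this
    _ = ∫ x, φ x • 𝓕 f x := by simp only [hψ, Complex.coe_smul]

theorem eLpNorm_fourier_two (hf : Integrable f) (hf2 : MemLp f 2) :
    eLpNorm (𝓕 f) 2 = eLpNorm f 2 volume := by
  rw [← eLpNorm_congr_ae (fourier_toLp_ae_eq hf hf2), ← eLpNorm_congr_ae hf2.coeFn_toLp,
    ← Lp.enorm_def, ← Lp.enorm_def, ← ofReal_norm, ← ofReal_norm, Lp.norm_fourier_eq]

theorem lintegral_enorm_fourier_sq_le (hf : Integrable f) :
    ∫⁻ w, ‖𝓕 f w‖ₑ ^ 2 ≤ ∫⁻ v, ‖f v‖ₑ ^ 2 := by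
  by_cases hf2 : MemLp f 2
  · have h := congrArg (· ^ (2 : ℝ)) (eLpNorm_fourier_two hf hf2)
    simp only [eLpNorm_eq_eLpNorm' two_ne_zero ENNReal.ofNat_ne_top, ENNReal.toReal_ofNat,
      eLpNorm'_rpow_eq_lintegral _ two_pos, ENNReal.rpow_ofNat] at h
    exact h.le
  · have h : eLpNorm f 2 volume = ∞ := by
      simpa only [MemLp, hf.1, true_and, not_lt, top_le_iff] using hf2
    rw [eLpNorm_eq_eLpNorm' two_ne_zero ENNReal.ofNat_ne_top, ENNReal.toReal_ofNat, eLpNorm',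
      ENNReal.rpow_eq_top_iff_of_pos (by norm_num)] at h
    simp only [ENNReal.rpow_ofNat] at h
    rw [h]
    exact le_top

theorem meas_lt_norm_fourier_le (hf : Integrable f) (hS : MeasurableSet S) (ht : 0 < t)
    (htail : ∫⁻ v in Sᶜ, ‖f v‖ₑ ≤ ENNReal.ofReal (t / 2)) :
    volume {w | t < ‖𝓕 f w‖} ≤ ENNReal.ofReal (4 / t ^ 2) * ∫⁻ v in S, ‖f v‖ₑ ^ 2 := by
  have hsub : {w | t < ‖𝓕 f w‖} ⊆
      {w | ENNReal.ofReal ((t / 2) ^ 2) ≤ ‖𝓕 (S.indicator f) w‖ₑ ^ 2} := by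
    intro w (hw : t < ‖𝓕 f w‖)
    have htail : ‖𝓕 (Sᶜ.indicator f) w‖ₑ ≤ ENNReal.ofReal (t / 2) := by
      refine (enorm_fourier_le_lintegral _ w).trans ?_
      simpa only [enorm_indicator_eq_indicator_enorm, lintegral_indicator hS.compl] using htail
    rw [← ofReal_norm, ENNReal.ofReal_le_ofReal_iff (by positivity)] at htail
    rw [fourier_indicator_add_compl hf hS] at hw
    have hadd := norm_add_le (𝓕 (S.indicator f) w) (𝓕 (Sᶜ.indicator f) w)
    rw [Set.mem_ofPred_eq, ← ofReal_norm, ← ENNReal.ofReal_pow (norm_nonneg _)]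
    gcongr
    linarith
  have hmeas : Measurable fun w => ‖𝓕 (S.indicator f) w‖ₑ ^ 2 :=
    (continuous_fourier (hf.indicator hS)).enorm.measurable.pow_const 2
  calc volume {w | t < ‖𝓕 f w‖}
      ≤ (∫⁻ w, ‖𝓕 (S.indicator f) w‖ₑ ^ 2) / ENNReal.ofReal ((t / 2) ^ 2) :=
        (measure_mono hsub).trans (meas_ge_le_lintegral_div hmeas.aemeasurable
          (by simp only [ne_eq, ENNReal.ofReal_eq_zero, not_le]; positivity) ENNReal.ofReal_ne_top)
    _ ≤ (∫⁻ v, ‖S.indicator f v‖ₑ ^ 2) / ENNReal.ofReal ((t / 2) ^ 2) := by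
        gcongr ?_ / _
        exact lintegral_enorm_fourier_sq_le (hf.indicator hS)
    _ = ENNReal.ofReal (4 / t ^ 2) * ∫⁻ v in S, ‖f v‖ₑ ^ 2 := by
        rw [ENNReal.div_eq_inv_mul, ← ENNReal.ofReal_inv_of_pos (by positivity),
          ← lintegral_indicator hS]
        congr 2
        · field_simp; norm_num
        · ext v; by_cases hv : v ∈ S <;> simp [hv]

theorem lintegral_enorm_fourier_rpow_le (hb : 2 < b) (hf : Integrable f) {A : V → ℝ}
    (hA : Measurable A) (hA0 : ∀ v, 0 ≤ A v)
    (htail : ∀ t > 0, ∫⁻ v in {v | A v ≤ t}, ‖f v‖ₑ ≤ ENNReal.ofReal (t / 2)) :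
    ∫⁻ w, ‖𝓕 f w‖ₑ ^ b ≤ ENNReal.ofReal (4 * b) *
      ∫⁻ v, ENNReal.ofReal (A v ^ (b - 2) / (b - 2)) * ‖f v‖ₑ ^ 2 := by
  have hlevel : ∀ t ∈ Set.Ioi (0 : ℝ),
      volume {w | t < ‖𝓕 f w‖} * ENNReal.ofReal (t ^ (b - 1)) ≤
        4 * (ENNReal.ofReal (t ^ (b - 3)) * ∫⁻ v in {v | t < A v}, ‖f v‖ₑ ^ 2) := by
    intro t (ht : 0 < t)
    have hcompl : {v | t < A v}ᶜ = {v | A v ≤ t} := by ext v; simp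
    calc _ ≤ ENNReal.ofReal (4 / t ^ 2) * (∫⁻ v in {v | t < A v}, ‖f v‖ₑ ^ 2) *
          ENNReal.ofReal (t ^ (b - 1)) := by
          gcongr
          exact meas_lt_norm_fourier_le hf (measurableSet_lt measurable_const hA) ht
            (hcompl ▸ htail t ht)
      _ = _ := by
          rw [mul_right_comm, ← ENNReal.ofReal_mul (by positivity), ← mul_assoc,
            ← ENNReal.ofReal_ofNat 4, ← ENNReal.ofReal_mul (by norm_num), ← Real.rpow_natCast]
          congr 2
          rw [div_mul_eq_mul_div, mul_div_assoc, ← Real.rpow_sub ht]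
          norm_num [sub_sub]
  calc ∫⁻ w, ‖𝓕 f w‖ₑ ^ b = ENNReal.ofReal b *
        ∫⁻ t in Set.Ioi (0 : ℝ), volume {w | t < ‖𝓕 f w‖} * ENNReal.ofReal (t ^ (b - 1)) := by
        rw [← lintegral_rpow_eq_lintegral_meas_lt_mul volume
          (Eventually.of_forall fun w => norm_nonneg _)
          (continuous_fourier hf).norm.aemeasurable (by linarith)]
        refine lintegral_congr fun w => ?_
        rw [← ENNReal.ofReal_rpow_of_nonneg (norm_nonneg _) (by linarith), ofReal_norm]
    _ ≤ ENNReal.ofReal b *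
        (4 * ∫⁻ v, ENNReal.ofReal (A v ^ (b - 2) / (b - 2)) * ‖f v‖ₑ ^ 2) := by
        rw [← lintegral_Ioi_indicator_rpow_mul hb hA hA0 (hf.1.enorm.pow_const 2),
          ← lintegral_const_mul' 4 _ (by norm_num)]
        gcongr ENNReal.ofReal b * ?_
        exact setLIntegral_mono' measurableSet_Ioi hlevel
    _ = _ := by
        rw [← mul_assoc, mul_comm (4 : ℝ), ENNReal.ofReal_mul (by linarith), ENNReal.ofReal_ofNat]

-- With `M = ∫ ‖f‖ ^ r` and `A = 2 M ‖f‖ ^ (1 - r)` the tail condition holds, and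
-- `A ^ (b - 2) * ‖f‖ ^ 2` is a multiple of `‖f‖ ^ r`.
theorem lintegral_enorm_fourier_rpow_le_of_stronglyMeasurable (hb : 2 < b) (hf : Integrable f)
    (hfm : StronglyMeasurable f) :
    ∫⁻ w, ‖𝓕 f w‖ₑ ^ b ≤ ENNReal.ofReal (4 * b * (2 ^ (b - 2) / (b - 2))) *
      (∫⁻ v, ‖f v‖ₑ ^ (b / (b - 1))) ^ (b - 1) := by
  have hb1 : 0 < b - 1 := by linarith
  have : 0 < b - 2 := by linarith
  set r := b / (b - 1) with hr
  have hr1 : (1 - r) * (b - 2) + (2 : ℕ) = r := by rw [hr]; field_simp; push_cast; ring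
  have hr0 : 1 < r := by rw [hr, one_lt_div hb1]; linarith
  set N := ∫⁻ v, ‖f v‖ₑ ^ r with hN
  rcases eq_or_ne N ∞ with hNtop | hNtop
  · rw [hNtop, ENNReal.top_rpow_of_pos hb1, ENNReal.mul_top]
    · exact le_top
    · simp only [ne_eq, ENNReal.ofReal_eq_zero, not_le]; positivity
  set M := N.toReal
  have hNM : N = ENNReal.ofReal M := (ENNReal.ofReal_toReal hNtop).symm
  have hM : 0 ≤ M := ENNReal.toReal_nonneg
  have hfn : Measurable fun v => ‖f v‖ := hfm.norm.measurable
  have hpoint : ∀ v, ENNReal.ofReal ((2 * M * ‖f v‖ ^ (1 - r)) ^ (b - 2) / (b - 2)) * ‖f v‖ₑ ^ 2 =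
      ENNReal.ofReal ((2 * M) ^ (b - 2) / (b - 2)) * ‖f v‖ₑ ^ r := fun v => by
    rcases eq_or_ne (f v) 0 with h0 | h0
    · simp [h0, show 0 < r by linarith]
    have hpos : 0 < ‖f v‖ := norm_pos_iff.2 h0
    rw [← ofReal_norm, ENNReal.ofReal_rpow_of_pos hpos, ← ENNReal.ofReal_pow hpos.le,
      ← ENNReal.ofReal_mul (by positivity), ← ENNReal.ofReal_mul (by positivity),
      Real.mul_rpow (by positivity) (by positivity), ← Real.rpow_mul hpos.le]
    conv_rhs => rw [← hr1, Real.rpow_add_natCast hpos.ne']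
    ring_nf
  refine (lintegral_enorm_fourier_rpow_le hb hf (A := fun v => 2 * M * ‖f v‖ ^ (1 - r))
    (by fun_prop) (fun v => by positivity) fun t ht =>
      setLIntegral_enorm_le_of_rpow_le hfm hr0 hNM hM ht).trans_eq ?_
  simp only [hpoint]
  rw [lintegral_const_mul' _ _ ENNReal.ofReal_ne_top, ← hN, hNM,
    ENNReal.ofReal_rpow_of_nonneg hM hb1.le, ← ENNReal.ofReal_mul (by positivity),
    ← ENNReal.ofReal_mul (by positivity), ← ENNReal.ofReal_mul (by positivity),
    show b - 1 = b - 2 + 1 by ring, Real.rpow_add_one' hM (by linarith),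
    Real.mul_rpow zero_le_two hM]
  ring_nf

theorem exists_eLpNorm'_fourier_le (hb : 2 < b) (hpb : 1 / p + 1 / b = 1) :
    ∃ C : ℝ≥0∞, C ≠ ∞ ∧ ∀ f : V → F, Integrable f →
      eLpNorm' (𝓕 f) b volume ≤ C * eLpNorm' f p volume := by
  have hb1 : b - 1 ≠ 0 := by linarith
  have hb0 : b ≠ 0 := by linarith
  have hp : 1 / p = (b - 1) / b := by rw [← sub_eq_of_eq_add hpb.symm]; field_simp
  have hp' : p = b / (b - 1) := by simpa using congrArg (·⁻¹) hp
  refine ⟨ENNReal.ofReal (4 * b * (2 ^ (b - 2) / (b - 2))) ^ (1 / b),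
    ENNReal.rpow_ne_top_of_nonneg (by positivity) ENNReal.ofReal_ne_top, fun f hf => ?_⟩
  let g := hf.1.mk f
  have hfg : f =ᵐ[volume] g := hf.1.ae_eq_mk
  have hF : 𝓕 f = 𝓕 g := by
    ext w
    simp only [Real.fourier_eq]
    exact integral_congr_ae (hfg.mono fun v hv => by simp only [hv])
  rw [hF, eLpNorm'_congr_ae hfg]
  calc eLpNorm' (𝓕 g) b volume
      ≤ (ENNReal.ofReal (4 * b * (2 ^ (b - 2) / (b - 2))) *
          (∫⁻ v, ‖g v‖ₑ ^ (b / (b - 1))) ^ (b - 1)) ^ (1 / b) := by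
        unfold eLpNorm'
        gcongr
        exact lintegral_enorm_fourier_rpow_le_of_stronglyMeasurable hb (hf.congr hfg)
          hf.1.stronglyMeasurable_mk
    _ = ENNReal.ofReal (4 * b * (2 ^ (b - 2) / (b - 2))) ^ (1 / b) * eLpNorm' g p volume := by
        rw [ENNReal.mul_rpow_of_nonneg _ _ (by positivity), ← ENNReal.rpow_mul, mul_one_div, ← hp,
          ← hp', eLpNorm']

end Fourier

/-! ### Fractional integration on the unit interval -/

theorem ennreal_mul_le_rpow_mul_rpow {a : ℝ} (ha1 : 1 ≤ a) (ha2 : a ≤ 2) (x y : ℝ≥0∞) :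
    x * y ≤ x ^ a * y ^ (2 - a) + y ^ a * x ^ (2 - a) := by
  have h : ∀ x y : ℝ≥0∞, y ≤ x → x * y ≤ x ^ a * y ^ (2 - a) := fun x y hxy =>
    calc x * y = x * (y ^ (a - 1) * y ^ (2 - a)) := by
          rw [← ENNReal.rpow_add_of_nonneg _ _ (by linarith) (by linarith),
            show a - 1 + (2 - a) = 1 by ring, ENNReal.rpow_one]
      _ ≤ x * (x ^ (a - 1) * y ^ (2 - a)) := by gcongr
      _ = x ^ a * y ^ (2 - a) := by rw [← mul_assoc, ennreal_mul_rpow_sub_one x ha1]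
  rcases le_total y x with hxy | hxy
  · exact (h x y hxy).trans le_self_add
  · exact (mul_comm x y ▸ h y x hxy).trans le_add_self

section SymmetricKernel

variable {α : Type*} [MeasurableSpace α] {μ : Measure α} {K : α → α → ℝ≥0∞} {a : ℝ} {D : ℝ≥0∞}
  {g : α → ℝ≥0∞}

theorem lintegral_lintegral_kernel_mul_rpow_mul_rpow_le (hK : Measurable (Function.uncurry K))
    (ha1 : 1 < a) (ha2 : a < 2) (hD : ∀ᵐ s ∂μ, eLpNorm' (K s) (a / (2 * a - 2)) μ ≤ D)
    (hg : Measurable g) :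
    ∫⁻ s, ∫⁻ t, K s t * (g s ^ a * g t ^ (2 - a)) ∂μ ∂μ ≤ D * eLpNorm' g a μ ^ 2 := by
  have hKl : ∀ s, Measurable (K s) := fun s => hK.of_uncurry_left
  have h2a : 0 < 2 - a := by linarith
  have h2a' : 0 < 2 * a - 2 := by linarith
  have hmul : ∀ s, Measurable fun t => K s t * g t ^ (2 - a) := fun s =>
    (hKl s).mul (hg.pow_const _)
  have hinner : ∀ᵐ s ∂μ, ∫⁻ t, K s t * g t ^ (2 - a) ∂μ ≤ D * eLpNorm' g a μ ^ (2 - a) := by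
    filter_upwards [hD] with s hs
    have hconj : (a / (2 * a - 2)).HolderConjugate (a / (2 - a)) := by
      rw [Real.holderConjugate_iff, one_lt_div h2a']
      exact ⟨by linarith, by field_simp; ring⟩
    have hpow := eLpNorm'_ennreal_rpow (μ := μ) g (a / (2 - a)) h2a
    rw [div_mul_cancel₀ _ h2a.ne'] at hpow
    rw [← hpow]
    exact (ENNReal.lintegral_mul_le_Lp_mul_Lq μ hconj (hKl s).aemeasurable
      (hg.pow_const _).aemeasurable).trans (mul_le_mul_left hs _)
  calc ∫⁻ s, ∫⁻ t, K s t * (g s ^ a * g t ^ (2 - a)) ∂μ ∂μ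
      ≤ ∫⁻ s, g s ^ a * (D * eLpNorm' g a μ ^ (2 - a)) ∂μ := by
        refine lintegral_mono_ae (hinner.mono fun s hs => ?_)
        simp_rw [mul_left_comm (K s _)]
        rw [lintegral_const_mul _ (hmul s)]
        gcongr
    _ = D * eLpNorm' g a μ ^ 2 := by
        have ha := eLpNorm'_rpow_eq_lintegral (μ := μ) g (by linarith : 0 < a)
        simp only [enorm_eq_self] at ha
        rw [lintegral_mul_const _ (by fun_prop), ← ha, mul_left_comm,
          ← ENNReal.rpow_add_of_nonneg _ _ (by linarith) h2a.le, add_sub_cancel,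
          ENNReal.rpow_ofNat]

theorem lintegral_lintegral_kernel_mul_le [SFinite μ] (hK : Measurable (Function.uncurry K))
    (hKsymm : ∀ s t, K s t = K t s) (ha1 : 1 < a) (ha2 : a < 2)
    (hD : ∀ᵐ s ∂μ, eLpNorm' (K s) (a / (2 * a - 2)) μ ≤ D) (hg : Measurable g) :
    ∫⁻ s, ∫⁻ t, K s t * (g s * g t) ∂μ ∂μ ≤ 2 * D * eLpNorm' g a μ ^ 2 := by
  have hmeas : Measurable fun z : α × α => K z.1 z.2 * (g z.1 ^ a * g z.2 ^ (2 - a)) :=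
    hK.mul (by fun_prop)
  have hhalf := lintegral_lintegral_kernel_mul_rpow_mul_rpow_le hK ha1 ha2 hD hg
  calc ∫⁻ s, ∫⁻ t, K s t * (g s * g t) ∂μ ∂μ
      ≤ ∫⁻ s, ∫⁻ t, K s t * (g s ^ a * g t ^ (2 - a)) +
          K s t * (g t ^ a * g s ^ (2 - a)) ∂μ ∂μ := by
        gcongr with s t
        rw [← mul_add]
        gcongr
        exact ennreal_mul_le_rpow_mul_rpow ha1.le ha2.le _ _
    _ = ∫⁻ s, ∫⁻ t, K s t * (g s ^ a * g t ^ (2 - a)) ∂μ ∂μ +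
          ∫⁻ s, ∫⁻ t, K t s * (g t ^ a * g s ^ (2 - a)) ∂μ ∂μ := by
        rw [← lintegral_add_left (f := fun s => ∫⁻ t, K s t * (g s ^ a * g t ^ (2 - a)) ∂μ)
          hmeas.lintegral_prod_right']
        refine lintegral_congr fun s => ?_
        rw [← lintegral_add_left (f := fun t => K s t * (g s ^ a * g t ^ (2 - a)))
          (hmeas.comp measurable_prodMk_left)]
        simp_rw [hKsymm s]
    _ ≤ 2 * D * eLpNorm' g a μ ^ 2 := by
        rw [lintegral_lintegral_swap (f := fun s t => K t s * (g t ^ a * g s ^ (2 - a)))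
          (hmeas.comp measurable_swap).aemeasurable, mul_assoc, two_mul]
        exact add_le_add hhalf hhalf

end SymmetricKernel

/-- Lebesgue measure on the unit interval. -/
noncomputable abbrev unitVolume : Measure ℝ := volume.restrict (Set.Icc 0 1)

instance : IsProbabilityMeasure unitVolume := ⟨by simp⟩

theorem exists_lintegral_enorm_sub_rpow_neg_le {c : ℝ} (hc : c < 1) :
    ∃ D : ℝ≥0∞, D ≠ ∞ ∧ ∀ s ∈ Set.Icc (0 : ℝ) 1, ∫⁻ t, ‖s - t‖ₑ ^ (-c) ∂unitVolume ≤ D := by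
  let k : ℝ → ℝ := (Set.Ioc 0 1).indicator (· ^ (-c))
  have hk : Integrable fun u : ℝ => k ‖u‖ := by
    rw [integrable_fun_norm_addHaar]
    simp only [Module.finrank_self, tsub_self, pow_zero, one_smul]
    refine ((integrable_indicator_iff measurableSet_Ioc).2 ?_).integrableOn
    rw [← intervalIntegrable_iff_integrableOn_Ioc_of_le zero_le_one]
    exact intervalIntegral.intervalIntegrable_rpow' (by linarith)
  refine ⟨∫⁻ u, ‖k ‖u‖‖ₑ, hk.2.ne, fun s hs => ?_⟩
  rw [← lintegral_sub_left_eq_self (fun u => ‖k ‖u‖‖ₑ) s]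
  refine le_trans ?_ (setLIntegral_le_lintegral (Set.Icc 0 1) _)
  have hne : ∀ᵐ t ∂unitVolume, t ≠ s := ae_restrict_of_ae (Measure.ae_ne volume s)
  refine lintegral_mono_ae ?_
  filter_upwards [hne, self_mem_ae_restrict measurableSet_Icc] with t hts ht
  have hpos : 0 < ‖s - t‖ := norm_pos_iff.2 (sub_ne_zero.2 hts.symm)
  have hle : ‖s - t‖ ≤ 1 := abs_le.2 ⟨by linarith [hs.1, ht.2], by linarith [hs.2, ht.1]⟩
  rw [show k ‖s - t‖ = ‖s - t‖ ^ (-c) from Set.indicator_of_mem (Set.mem_Ioc.2 ⟨hpos, hle⟩) _,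
    Real.enorm_of_nonneg (r := ‖s - t‖ ^ (-c)) (by positivity), ← ofReal_norm,
    ENNReal.ofReal_rpow_of_pos hpos]

theorem exists_lintegral_enorm_sub_rpow_neg_mul_le {γ a : ℝ} (hγ0 : 0 ≤ γ) (hγ1 : γ < 1)
    (ha0 : 0 < a) (ha : 1 / a < 1 - γ / 2) :
    ∃ C : ℝ≥0∞, C ≠ ∞ ∧ ∀ g : ℝ → ℝ≥0∞, Measurable g →
      ∫⁻ s, ∫⁻ t, ‖s - t‖ₑ ^ (-γ) * (g s * g t) ∂unitVolume ∂unitVolume ≤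
        C * eLpNorm' g a unitVolume ^ 2 := by
  obtain ⟨b, hb1, hb2, hba, hb⟩ : ∃ b, 1 < b ∧ b < 2 ∧ b ≤ a ∧ 1 / b < 1 - γ / 2 := by
    have hinv : (1 - γ / 2)⁻¹ < a := by
      rw [one_div] at ha
      exact inv_lt_of_inv_lt₀ ha0 ha
    have h1 : 1 ≤ (1 - γ / 2)⁻¹ := (one_le_inv₀ (by linarith)).2 (by linarith)
    have h2 : (1 - γ / 2)⁻¹ < 2 := inv_lt_of_inv_lt₀ two_pos (by linarith)
    obtain ⟨b, hb, hb'⟩ := exists_between (lt_min hinv h2)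
    refine ⟨b, by linarith, hb'.trans_le (min_le_right _ _), hb'.le.trans (min_le_left _ _), ?_⟩
    rw [one_div]
    exact inv_lt_of_inv_lt₀ (by linarith) hb
  set ρ := b / (2 * b - 2) with hρ
  have hρ0 : 0 < ρ := div_pos (by linarith) (by linarith)
  have hγρ : γ * ρ < 1 := by
    rw [div_lt_iff₀ (by linarith)] at hb
    rw [hρ, mul_div_assoc', div_lt_one (by linarith)]
    linarith
  obtain ⟨D, hD, hK⟩ := exists_lintegral_enorm_sub_rpow_neg_le hγρ
  refine ⟨2 * D ^ (1 / ρ), ENNReal.mul_ne_top (by norm_num)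
    (ENNReal.rpow_ne_top_of_nonneg (by positivity) hD), fun g hg => ?_⟩
  refine (lintegral_lintegral_kernel_mul_le (a := b) (D := D ^ (1 / ρ)) (by fun_prop)
    (fun s t => by rw [enorm_sub_rev]) hb1 hb2 ?_ hg).trans ?_
  · filter_upwards [self_mem_ae_restrict measurableSet_Icc] with s hs
    simp only [eLpNorm', enorm_eq_self, ← ENNReal.rpow_mul, neg_mul]
    exact ENNReal.rpow_le_rpow (hK s hs) (by positivity)
  · gcongr
    exact eLpNorm'_le_eLpNorm'_of_exponent_le (by linarith) hba _ hg.aestronglyMeasurable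

/-! ### Restricted X-ray transform -/

theorem lintegral_comp_add_mul {c : ℝ} (hc : c ≠ 0) (x : ℝ) {f : ℝ → ℝ≥0∞} (hf : Measurable f) :
    ∫⁻ y, f (x + y * c) = ‖c‖ₑ⁻¹ * ∫⁻ y, f y := by
  have hmap : ∫⁻ y, f (x + y * c) = ∫⁻ z, f (x + z) ∂(Measure.map (· * c) volume) := by
    rw [lintegral_map (by fun_prop) (by fun_prop)]
  rw [hmap, Real.map_volume_mul_right hc, lintegral_smul_measure, lintegral_add_left_eq_self,
    smul_eq_mul, abs_inv, ENNReal.ofReal_inv_of_pos (abs_pos.2 hc), Real.enorm_eq_ofReal_abs]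

theorem lintegral_mul_of_comp_lines {f g : ℝ → ℝ≥0∞} (hf : Measurable f) (hg : Measurable g)
    {s t : ℝ} (hst : s ≠ t) :
    ∫⁻ z : ℝ × ℝ, f (z.2 + z.1 * s) * g (z.2 + z.1 * t) =
      ‖s - t‖ₑ⁻¹ * ((∫⁻ x, f x) * ∫⁻ x, g x) := by
  rw [Measure.volume_eq_prod, lintegral_prod _ (by fun_prop)]
  calc ∫⁻ y, ∫⁻ x, f (x + y * s) * g (x + y * t)
      = ∫⁻ y, ∫⁻ x, f x * g (x + y * (t - s)) := by
        refine lintegral_congr fun y => ?_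
        rw [← lintegral_add_right_eq_self (fun x => f x * g (x + y * (t - s))) (y * s)]
        simp_rw [mul_sub, add_assoc, add_sub_cancel]
    _ = ∫⁻ x, ∫⁻ y, f x * g (x + y * (t - s)) := lintegral_lintegral_swap (by fun_prop)
    _ = ∫⁻ x, f x * (‖t - s‖ₑ⁻¹ * ∫⁻ y, g y) := by
        refine lintegral_congr fun x => ?_
        rw [lintegral_const_mul _ (by fun_prop),
          lintegral_comp_add_mul (sub_ne_zero.2 hst.symm) x hg]
    _ = ‖s - t‖ₑ⁻¹ * ((∫⁻ x, f x) * ∫⁻ x, g x) := by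
        rw [lintegral_mul_const _ hf, mul_left_comm, enorm_sub_rev]

theorem eLpNorm'_mul_of_comp_lines {f g : ℝ → ℝ≥0∞} (hf : Measurable f) (hg : Measurable g)
    {s t : ℝ} (hst : s ≠ t) {r : ℝ} (hr : 0 < r) :
    eLpNorm' (fun z : ℝ × ℝ => f (z.2 + z.1 * s) * g (z.2 + z.1 * t)) r volume =
      ‖s - t‖ₑ ^ (-(1 / r)) * (eLpNorm' f r volume * eLpNorm' g r volume) := by
  have hr' : 0 ≤ 1 / r := by positivity
  simp only [eLpNorm', enorm_eq_self, ENNReal.mul_rpow_of_nonneg _ _ hr.le]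
  rw [lintegral_mul_of_comp_lines (hf.pow_const r) (hg.pow_const r) hst,
    ENNReal.mul_rpow_of_nonneg _ _ hr', ENNReal.mul_rpow_of_nonneg _ _ hr', ENNReal.rpow_neg,
    ENNReal.inv_rpow]

-- The square of `∫ h s (z.2 + z.1 * s) ds` is a double integral over pairs of lines; Minkowski puts
-- the norm in `z` inside, where two transversal lines give the kernel `|s - t| ^ (-2 / r)`.
theorem eLpNorm'_lintegral_comp_lines_sq_le {r : ℝ} (hr : 2 ≤ r) {h : ℝ → ℝ → ℝ≥0∞}
    (hh : Measurable (Function.uncurry h)) :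
    eLpNorm' (fun z : ℝ × ℝ => ∫⁻ s, h s (z.2 + z.1 * s) ∂unitVolume) r volume ^ 2 ≤
      ∫⁻ s, ∫⁻ t, ‖s - t‖ₑ ^ (-(2 / r)) *
        (eLpNorm' (h s) (r / 2) volume * eLpNorm' (h t) (r / 2) volume)
        ∂unitVolume ∂unitVolume := by
  have hline : Measurable fun w : (ℝ × ℝ) × ℝ => h w.2 (w.1.2 + w.1.1 * w.2) :=
    hh.comp (f := fun w : (ℝ × ℝ) × ℝ => (w.2, w.1.2 + w.1.1 * w.2)) (by fun_prop)
  have hpair : Measurable fun w : (ℝ × ℝ) × (ℝ × ℝ) =>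
      h w.2.1 (w.1.2 + w.1.1 * w.2.1) * h w.2.2 (w.1.2 + w.1.1 * w.2.2) :=
    (hline.comp (f := fun w : (ℝ × ℝ) × (ℝ × ℝ) => (w.1, w.2.1)) (by fun_prop)).mul
      (hline.comp (f := fun w : (ℝ × ℝ) × (ℝ × ℝ) => (w.1, w.2.2)) (by fun_prop))
  have hnorm : Measurable fun b : ℝ × ℝ => eLpNorm' (fun z : ℝ × ℝ =>
      h b.1 (z.2 + z.1 * b.1) * h b.2 (z.2 + z.1 * b.2)) (r / 2) volume :=
    measurable_eLpNorm'_right (f := fun b z : ℝ × ℝ =>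
      h b.1 (z.2 + z.1 * b.1) * h b.2 (z.2 + z.1 * b.2)) (hpair.comp measurable_swap) _
  have hsq : ∀ z : ℝ × ℝ, (∫⁻ s, h s (z.2 + z.1 * s) ∂unitVolume) ^ (2 : ℝ) =
      ∫⁻ b : ℝ × ℝ, h b.1 (z.2 + z.1 * b.1) * h b.2 (z.2 + z.1 * b.2)
        ∂unitVolume.prod unitVolume := fun z => by
    have hz : AEMeasurable (fun s => h s (z.2 + z.1 * s)) unitVolume :=
      (hline.comp (measurable_prodMk_left (x := z))).aemeasurable
    rw [lintegral_prod_mul hz hz, ENNReal.rpow_two, sq]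
  have hpow := eLpNorm'_ennreal_rpow (μ := volume)
    (fun z : ℝ × ℝ => ∫⁻ s, h s (z.2 + z.1 * s) ∂unitVolume) (r / 2) two_pos
  rw [div_mul_cancel₀ _ two_ne_zero, ENNReal.rpow_two] at hpow
  rw [← hpow]
  simp_rw [hsq]
  refine (eLpNorm'_lintegral_le_lintegral_eLpNorm' hpair (by linarith)).trans_eq ?_
  rw [lintegral_prod _ hnorm.aemeasurable]
  refine lintegral_congr fun s => lintegral_congr_ae ?_
  filter_upwards [ae_restrict_of_ae (Measure.ae_ne volume s)] with t hts
  rw [eLpNorm'_mul_of_comp_lines hh.of_uncurry_left hh.of_uncurry_left (Ne.symm hts) (by linarith),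
    one_div_div]

theorem exists_eLpNorm'_comp_lines_le {p q p' : ℝ} (hp : 0 < p) (hp' : 0 < p') (hpq : 2 * p < q)
    (hpp' : 1 / p' < 1 / p - 1 / q) : ∃ C : ℝ≥0∞, C ≠ ∞ ∧ ∀ h : ℝ → ℝ → ℝ≥0∞,
      Measurable (Function.uncurry h) →
      eLpNorm' (fun z : ℝ × ℝ => eLpNorm' (fun s => h s (z.2 + z.1 * s)) p unitVolume) q volume ≤
        C * eLpNorm' (fun s => eLpNorm' (h s) (q / 2) volume) p' unitVolume := by
  have hq : 0 < q := by linarith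
  set r := q / p with hr
  have hr2 : 2 < r := by rwa [hr, lt_div_iff₀ hp]
  have hexp : 1 / (p' / p) < 1 - 2 / r / 2 := by
    have := mul_lt_mul_of_pos_left hpp' hp
    rw [hr]
    field_simp at this ⊢
    linarith
  obtain ⟨C, hC, hHLS⟩ := exists_lintegral_enorm_sub_rpow_neg_mul_le (γ := 2 / r) (a := p' / p)
    (by positivity) ((div_lt_one (by linarith)).2 hr2) (by positivity) hexp
  refine ⟨C ^ (1 / (2 * p)), ENNReal.rpow_ne_top_of_nonneg (by positivity) hC, fun h hh => ?_⟩
  have hN : ∀ s, eLpNorm' (fun x => h s x ^ p) (r / 2) volume =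
      eLpNorm' (h s) (q / 2) volume ^ p := fun s => by
    rw [eLpNorm'_ennreal_rpow _ _ hp]
    congr 2
    rw [hr]; field_simp
  have hbound := (eLpNorm'_lintegral_comp_lines_sq_le hr2.le (h := fun s x => h s x ^ p)
    (hh.pow_const p)).trans (by
      simp_rw [hN]
      exact hHLS _ ((measurable_eLpNorm'_right hh _).pow_const p))
  have hG : ∀ z : ℝ × ℝ, ∫⁻ s, h s (z.2 + z.1 * s) ^ p ∂unitVolume =
      eLpNorm' (fun s => h s (z.2 + z.1 * s)) p unitVolume ^ p := fun z => by
    rw [eLpNorm'_rpow_eq_lintegral _ hp]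
    rfl
  simp_rw [hG] at hbound
  rw [eLpNorm'_ennreal_rpow _ _ hp, eLpNorm'_ennreal_rpow _ _ hp, hr, div_mul_cancel₀ _ hp.ne',
    div_mul_cancel₀ _ hp.ne', ← ENNReal.rpow_two, ← ENNReal.rpow_two, ← ENNReal.rpow_mul,
    ← ENNReal.rpow_mul, mul_comm p 2] at hbound
  rw [← ENNReal.rpow_le_rpow_iff (by positivity : 0 < 2 * p),
    ENNReal.mul_rpow_of_nonneg _ _ (by positivity), ← ENNReal.rpow_mul,
    one_div_mul_cancel (by positivity), ENNReal.rpow_one]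
  exact hbound

/-! ### The planar parabola -/

theorem eLpNorm'_prod_eq {α β ε : Type*} [MeasurableSpace α] [MeasurableSpace β]
    [TopologicalSpace ε] [ContinuousENorm ε] [MeasurableSpace ε] [OpensMeasurableSpace ε]
    {μ : Measure α} {ν : Measure β} [SFinite ν] {f : α × β → ε} (hf : Measurable f) {q : ℝ}
    (hq : 0 < q) :
    eLpNorm' f q (μ.prod ν) = eLpNorm' (fun a => eLpNorm' (fun b => f (a, b)) q ν) q μ := by
  simp_rw [eLpNorm', enorm_eq_self, ← ENNReal.rpow_mul, one_div_mul_cancel hq.ne',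
    ENNReal.rpow_one]
  rw [lintegral_prod _ (by fun_prop)]

theorem exists_eLpNorm'_fourierInv_le {V F : Type*} [NormedAddCommGroup V] [InnerProductSpace ℝ V]
    [FiniteDimensional ℝ V] [MeasurableSpace V] [BorelSpace V] [NormedAddCommGroup F]
    [InnerProductSpace ℂ F] [CompleteSpace F] {b p : ℝ} (hb : 2 < b) (hpb : 1 / p + 1 / b = 1) :
    ∃ C : ℝ≥0∞, C ≠ ∞ ∧ ∀ f : V → F, Integrable f →
      eLpNorm' (𝓕⁻ f) b volume ≤ C * eLpNorm' f p volume := by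
  obtain ⟨C, hC, hHY⟩ := exists_eLpNorm'_fourier_le (V := V) (F := F) hb hpb
  refine ⟨C, hC, fun f hf => (hHY _ hf).trans_eq' ?_⟩
  rw [eLpNorm', eLpNorm', ← lintegral_neg_eq_self]
  simp_rw [Real.fourierInv_eq_fourier_neg]

theorem eLpNorm'_comp_mul_left {ε : Type*} [TopologicalSpace ε] [ContinuousENorm ε]
    [MeasurableSpace ε] [OpensMeasurableSpace ε] {f : ℝ → ε} (hf : Measurable f) {c : ℝ}
    (hc : c ≠ 0) {b : ℝ} (hb : 0 < b) :
    eLpNorm' (fun y => f (c * y)) b volume = ‖c‖ₑ ^ (-(1 / b)) * eLpNorm' f b volume := by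
  have h := lintegral_comp_add_mul hc 0 (f := fun y => ‖f y‖ₑ ^ b) (by fun_prop)
  simp_rw [zero_add, mul_comm _ c] at h
  rw [eLpNorm', h, ENNReal.mul_rpow_of_nonneg _ _ (by positivity), ENNReal.rpow_neg,
    ENNReal.inv_rpow, eLpNorm']

/-- The integrand `f (s + v) * conj (f s)` of the autocorrelation of `f` at lag `v`. -/
noncomputable def lagProduct (f : ℝ → ℂ) (v s : ℝ) : ℂ := f (s + v) * starRingEnd ℂ (f s)

section LagProduct

variable {f : ℝ → ℂ}

theorem measurable_lagProduct (hf : Measurable f) : Measurable (Function.uncurry (lagProduct f)) :=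
  (hf.comp (measurable_snd.add measurable_fst)).mul
    (Complex.continuous_conj.measurable.comp (hf.comp measurable_snd))

theorem integrable_lagProduct (hf : Integrable f) :
    Integrable (Function.uncurry (lagProduct f)) (volume.prod volume) := by
  have hconj : Integrable fun s => starRingEnd ℂ (f s) := Complex.conjCLE.integrable_comp_iff.2 hf
  have hprod := (measurePreserving_prod_add volume volume).integrable_comp_of_integrable
    (hconj.mul_prod hf)
  refine hprod.swap.congr (ae_of_all _ fun z => ?_)
  simp [Function.uncurry, lagProduct, mul_comm, add_comm]

theorem integral_lagProduct (hf : Integrable f) :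
    ∫ v, ∫ s, lagProduct f v s = (∫ s, f s) * starRingEnd ℂ (∫ s, f s) := by
  rw [integral_integral_swap (integrable_lagProduct hf)]
  simp_rw [lagProduct, integral_mul_const, integral_add_left_eq_self f, integral_const_mul,
    integral_conj]

end LagProduct

theorem lagProduct_quadraticPhase_smul (f : ℝ → ℂ) (x y v s : ℝ) :
    lagProduct (fun s => 𝐞 (x * s + y * s ^ 2) • f s) v s =
      𝐞 (v * x) • 𝐞 (y * v ^ 2) • 𝐞 (s * (2 * v * y)) • lagProduct f v s := by
  have hphase : 𝐞 (x * (s + v) + y * (s + v) ^ 2) * 𝐞 (-(x * s + y * s ^ 2)) =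
      𝐞 (v * x) * 𝐞 (y * v ^ 2) * 𝐞 (s * (2 * v * y)) := by
    simp_rw [← AddChar.map_add_eq_mul]
    congr 1
    ring
  have hphase' := congrArg (fun c : Circle => (c : ℂ)) hphase
  simp only [Circle.coe_mul, AddChar.map_neg_eq_inv, Circle.coe_inv_eq_conj] at hphase'
  simp only [lagProduct, Circle.smul_def, smul_eq_mul, map_mul]
  linear_combination (f (s + v) * starRingEnd ℂ (f s)) * hphase'

theorem integrable_circle_smul {α E : Type*} [MeasurableSpace α] {μ : Measure α}
    [NormedAddCommGroup E] [NormedSpace ℂ E] {f : α → E} (hf : Integrable f μ) {u : α → ℝ}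
    (hu : Measurable u) : Integrable (fun a => 𝐞 (u a) • f a) μ :=
  (integrable_norm_iff (by fun_prop)).1 (by simpa only [Circle.norm_smul] using hf.norm)

theorem enorm_circle_smul {E : Type*} [NormedAddCommGroup E] [NormedSpace ℂ E] (c : Circle)
    (x : E) : ‖c • x‖ₑ = ‖x‖ₑ := by
  rw [← ofReal_norm, Circle.norm_smul, ofReal_norm]

theorem measurable_integral_circle_smul {α β : Type*} [MeasurableSpace α] [MeasurableSpace β]
    {ν : Measure β} [SFinite ν] {u : α × β → ℝ} {f : α × β → ℂ} (hu : Measurable u)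
    (hf : Measurable f) : Measurable fun a => ∫ b, 𝐞 (u (a, b)) • f (a, b) ∂ν :=
  (StronglyMeasurable.integral_prod_right' (f := fun z => 𝐞 (u z) • f z)
    (Measurable.smul (by fun_prop) hf).stronglyMeasurable).measurable

section QuadraticPhase

variable {f : ℝ → ℂ}

theorem enorm_integral_quadraticPhase_sq (hf : Integrable f) (x y : ℝ) :
    ‖∫ s, 𝐞 (x * s + y * s ^ 2) • f s‖ₑ ^ 2 =
      ‖𝓕⁻ (fun v => 𝐞 (y * v ^ 2) • 𝓕⁻ (lagProduct f v) (2 * v * y)) x‖ₑ := by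
  have hint := integral_lagProduct
    (integrable_circle_smul hf (u := fun s => x * s + y * s ^ 2) (by fun_prop))
  simp_rw [lagProduct_quadraticPhase_smul, Circle.smul_def, integral_smul] at hint
  simp_rw [Real.fourierInv_eq, RCLike.inner_apply, conj_trivial, Circle.smul_def, mul_comm x _,
    mul_comm (2 * _ * y)]
  simp_rw [mul_comm x] at hint
  rw [hint, enorm_mul, RCLike.enorm_conj, sq]

theorem integrable_fourierInv_lagProduct (hf : Integrable f) (y : ℝ) :
    Integrable fun v => 𝐞 (y * v ^ 2) • 𝓕⁻ (lagProduct f v) (2 * v * y) := by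
  have hphase : Integrable (fun z : ℝ × ℝ => 𝐞 (inner ℝ z.2 (2 * z.1 * y)) • lagProduct f z.1 z.2)
      (volume.prod volume) :=
    integrable_circle_smul (integrable_lagProduct hf) (by fun_prop)
  simp_rw [Real.fourierInv_eq]
  exact integrable_circle_smul hphase.integral_prod_left (by fun_prop)

theorem measurable_fourierInv_lagProduct (hf : Measurable f) :
    Measurable fun z : ℝ × ℝ => 𝓕⁻ (lagProduct f z.2) (2 * z.2 * z.1) := by
  simp_rw [Real.fourierInv_eq]
  exact measurable_integral_circle_smul
    (u := fun w : (ℝ × ℝ) × ℝ => inner ℝ w.2 (2 * w.1.2 * w.1.1))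
    (f := fun w => lagProduct f w.1.2 w.2) (by fun_prop)
    ((measurable_lagProduct hf).comp (f := fun w : (ℝ × ℝ) × ℝ => (w.1.2, w.2)) (by fun_prop))

variable {b p : ℝ}

theorem exists_eLpNorm'_fourierInv_lagProduct_le (hb : 2 < b) (hpb : 1 / p + 1 / b = 1) :
    ∃ C : ℝ≥0∞, C ≠ ∞ ∧ ∀ f : ℝ → ℂ, Integrable f →
      ∀ᵐ v, eLpNorm' (fun y => 𝓕⁻ (lagProduct f v) (2 * v * y)) b volume ≤
        C * (‖v‖ₑ ^ (-(1 / b)) * eLpNorm' (lagProduct f v) p volume) := by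
  have hb0 : 0 < b := by linarith
  obtain ⟨C, hC, hHY⟩ := exists_eLpNorm'_fourierInv_le (V := ℝ) (F := ℂ) hb hpb
  refine ⟨C, hC, fun f hfi => ?_⟩
  filter_upwards [(integrable_lagProduct hfi).prod_right_ae, Measure.ae_ne volume 0] with v hv hv0
  have hmeas : Measurable (𝓕⁻ (lagProduct f v)) := by
    rw [Real.fourierInv_eq_fourier_comp_neg]
    exact (continuous_fourier hv.comp_neg).measurable
  rw [eLpNorm'_comp_mul_left hmeas (by positivity) hb0, mul_left_comm]
  gcongr ?_ * ?_
  · rw [ENNReal.rpow_neg, ENNReal.rpow_neg, enorm_mul]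
    gcongr
    exact le_mul_of_one_le_left' (by simp [enorm_eq_nnnorm])
  · exact hHY _ hv

-- Two Hausdorff–Young inequalities, in `x` and then in `y`, separated by Minkowski.
theorem exists_eLpNorm'_quadraticPhase_sq_le (hb : 2 < b) (hpb : 1 / p + 1 / b = 1) :
    ∃ C : ℝ≥0∞, C ≠ ∞ ∧ ∀ f : ℝ → ℂ, Measurable f → Integrable f →
      eLpNorm' (fun z : ℝ × ℝ => ∫ s, 𝐞 (z.2 * s + z.1 * s ^ 2) • f s) (b * 2) volume ^ 2 ≤
        C * eLpNorm' (fun v => ‖v‖ₑ ^ (-(1 / b)) * eLpNorm' (lagProduct f v) p volume)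
          p volume := by
  have hb0 : 0 < b := by linarith
  have hbinv : 1 / b < 1 / 2 := one_div_lt_one_div_of_lt two_pos hb
  have hp0 : 0 < p := one_div_pos.1 (by linarith)
  have hpb' : p ≤ b := (one_div_le_one_div hb0 hp0).1 (by linarith)
  obtain ⟨C, hC, hHY⟩ := exists_eLpNorm'_fourierInv_le (V := ℝ) (F := ℂ) hb hpb
  obtain ⟨D, hD, hlag⟩ := exists_eLpNorm'_fourierInv_lagProduct_le hb hpb
  refine ⟨C * D, ENNReal.mul_ne_top hC hD, fun f hf hfi => ?_⟩
  set T : ℝ × ℝ → ℂ := fun z => ∫ s, 𝐞 (z.2 * s + z.1 * s ^ 2) • f s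
  have hT : Measurable T := measurable_integral_circle_smul
    (u := fun w : (ℝ × ℝ) × ℝ => w.1.2 * w.2 + w.1.1 * w.2 ^ 2) (f := fun w => f w.2)
    (by fun_prop) (by fun_prop)
  set R : ℝ → ℝ → ℂ := fun y v => 𝓕⁻ (lagProduct f v) (2 * v * y)
  have hR : Measurable fun z : ℝ × ℝ => ‖R z.1 z.2‖ₑ :=
    (measurable_fourierInv_lagProduct hf).enorm
  calc eLpNorm' T (b * 2) volume ^ 2
      = eLpNorm' (fun z => ‖T z‖ₑ ^ (2 : ℝ)) b volume := by
        rw [eLpNorm'_ennreal_rpow _ _ two_pos, eLpNorm'_enorm, ENNReal.rpow_two]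
    _ = eLpNorm' (fun y => eLpNorm' (𝓕⁻ fun v => 𝐞 (y * v ^ 2) • R y v) b volume) b volume := by
        rw [Measure.volume_eq_prod, eLpNorm'_prod_eq (by fun_prop) hb0]
        simp_rw [T, ENNReal.rpow_two, enorm_integral_quadraticPhase_sq hfi, eLpNorm'_enorm]
        rfl
    _ ≤ eLpNorm' (fun y => C * eLpNorm' (fun v => ‖R y v‖ₑ) p volume) b volume := by
        refine eLpNorm'_mono_enorm hb0.le fun y => ?_
        refine (hHY _ (integrable_fourierInv_lagProduct hfi y)).trans_eq ?_
        simp_rw [enorm_eq_self, eLpNorm', enorm_eq_self, enorm_circle_smul]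
        rfl
    _ ≤ C * eLpNorm' (fun v => eLpNorm' (fun y => ‖R y v‖ₑ) b volume) p volume := by
        rw [eLpNorm'_const_mul _ hC hb0]
        gcongr
        exact eLpNorm'_eLpNorm'_le_swap hR hp0 hpb'
    _ ≤ C * eLpNorm' (fun v => D * (‖v‖ₑ ^ (-(1 / b)) * eLpNorm' (lagProduct f v) p volume))
          p volume := by
        refine mul_le_mul_right (eLpNorm'_mono_enorm_ae hp0.le ?_) C
        filter_upwards [hlag f hfi] with v hv
        simpa only [enorm_eq_self, eLpNorm'_enorm] using hv
    _ = _ := by rw [eLpNorm'_const_mul _ hD hp0, mul_assoc]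

theorem lintegral_mul_lintegral_lagProduct_rpow (hf : Measurable f) {k : ℝ → ℝ≥0∞}
    (hk : Measurable k) (hp : 0 < p) :
    ∫⁻ v, k v * ∫⁻ s, ‖lagProduct f v s‖ₑ ^ p =
      ∫⁻ s, ∫⁻ t, k (t - s) * (‖f s‖ₑ ^ p * ‖f t‖ₑ ^ p) := by
  have hlag : ∀ v s, ‖lagProduct f v s‖ₑ ^ p = ‖f s‖ₑ ^ p * ‖f (s + v)‖ₑ ^ p := fun v s => by
    rw [lagProduct, enorm_mul, RCLike.enorm_conj, mul_comm, ENNReal.mul_rpow_of_nonneg _ _ hp.le]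
  simp_rw [hlag]
  calc _ = ∫⁻ v, ∫⁻ s, k v * (‖f s‖ₑ ^ p * ‖f (s + v)‖ₑ ^ p) :=
        lintegral_congr fun v => (lintegral_const_mul _ (by fun_prop)).symm
    _ = ∫⁻ s, ∫⁻ v, k v * (‖f s‖ₑ ^ p * ‖f (s + v)‖ₑ ^ p) :=
        lintegral_lintegral_swap (by fun_prop)
    _ = _ := lintegral_congr fun s => by
        rw [← lintegral_add_left_eq_self (fun t => k (t - s) * (‖f s‖ₑ ^ p * ‖f t‖ₑ ^ p)) s]
        simp_rw [add_sub_cancel_left]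

end QuadraticPhase

theorem lintegral_lintegral_indicator_Icc {p : ℝ} (hp : 0 < p) (K : ℝ → ℝ → ℝ≥0∞) (g : ℝ → ℂ) :
    ∫⁻ s, ∫⁻ t, K s t * (‖(Set.Icc 0 1).indicator g s‖ₑ ^ p * ‖(Set.Icc 0 1).indicator g t‖ₑ ^ p) =
      ∫⁻ s, ∫⁻ t, K s t * (‖g s‖ₑ ^ p * ‖g t‖ₑ ^ p) ∂unitVolume ∂unitVolume := by
  simp_rw [← lintegral_indicator measurableSet_Icc]
  refine lintegral_congr fun s => ?_
  by_cases hs : s ∈ Set.Icc (0 : ℝ) 1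
  · rw [Set.indicator_of_mem hs, Set.indicator_of_mem hs]
    refine lintegral_congr fun t => ?_
    by_cases ht : t ∈ Set.Icc (0 : ℝ) 1 <;> simp [ht, hp]
  · simp [hs, hp]

theorem exists_eLpNorm'_lagProduct_indicator_Icc_le {γ r p : ℝ} (hγ0 : 0 ≤ γ) (hγ1 : γ < 1)
    (hr : 0 < r) (hp : 0 < p) (hpr : r / p < 1 - γ / 2) :
    ∃ C : ℝ≥0∞, C ≠ ∞ ∧ ∀ g : ℝ → ℂ, Measurable g →
      eLpNorm' (fun v => ‖v‖ₑ ^ (-(γ / r)) *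
        eLpNorm' (lagProduct ((Set.Icc 0 1).indicator g) v) r volume) r volume ≤
        C * eLpNorm' g p unitVolume ^ 2 := by
  obtain ⟨C, hC, hHLS⟩ := exists_lintegral_enorm_sub_rpow_neg_mul_le hγ0 hγ1 (div_pos hp hr)
    (by rwa [one_div_div])
  refine ⟨C ^ (1 / r), ENNReal.rpow_ne_top_of_nonneg (by positivity) hC, fun g hg => ?_⟩
  set f := (Set.Icc (0 : ℝ) 1).indicator g
  have hf : Measurable f := hg.indicator measurableSet_Icc
  have hpow : ∀ v, ‖‖v‖ₑ ^ (-(γ / r)) * eLpNorm' (lagProduct f v) r volume‖ₑ ^ r =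
      ‖v‖ₑ ^ (-γ) * ∫⁻ s, ‖lagProduct f v s‖ₑ ^ r := fun v => by
    rw [enorm_eq_self, ENNReal.mul_rpow_of_nonneg _ _ hr.le, eLpNorm'_rpow_eq_lintegral _ hr,
      ← ENNReal.rpow_mul, neg_mul, div_mul_cancel₀ _ hr.ne']
  have hbound : ∫⁻ s, ∫⁻ t, ‖t - s‖ₑ ^ (-γ) * (‖g s‖ₑ ^ r * ‖g t‖ₑ ^ r) ∂unitVolume ∂unitVolume ≤
      C * (eLpNorm' g p unitVolume ^ 2) ^ r := by
    have h := hHLS (fun s => ‖g s‖ₑ ^ r) (by fun_prop)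
    rw [eLpNorm'_ennreal_rpow _ _ hr, div_mul_cancel₀ _ hr.ne', eLpNorm'_enorm,
      ← ENNReal.rpow_two, ← ENNReal.rpow_mul, mul_comm r, ENNReal.rpow_mul, ENNReal.rpow_two] at h
    simpa only [enorm_sub_rev] using h
  rw [← lintegral_lintegral_indicator_Icc hr,
    ← lintegral_mul_lintegral_lagProduct_rpow hf (k := fun v => ‖v‖ₑ ^ (-γ)) (by fun_prop) hr]
    at hbound
  rw [eLpNorm']
  simp_rw [hpow]
  refine (ENNReal.rpow_le_rpow hbound (by positivity)).trans_eq ?_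
  rw [ENNReal.mul_rpow_of_nonneg _ _ (by positivity), ← ENNReal.rpow_mul,
    mul_one_div_cancel hr.ne', ENNReal.rpow_one]

theorem exists_eLpNorm'_parabola_le {q p : ℝ} (hq : 4 < q) (hp : 0 < p) (hpq : 1 / p < 1 - 3 / q) :
    ∃ C : ℝ≥0∞, C ≠ ∞ ∧ ∀ g : ℝ → ℂ, Measurable g → Integrable g unitVolume →
      eLpNorm' (fun z : ℝ × ℝ => ∫ s, 𝐞 (z.2 * s + z.1 * s ^ 2) • g s ∂unitVolume) q volume ≤
        C * eLpNorm' g p unitVolume := by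
  have hq2 : 0 < q - 2 := by linarith
  set r := q / (q - 2) with hr
  have hr0 : 0 < r := by positivity
  have hγ : 1 / (q / 2) = 2 / (q - 2) / r := by rw [hr]; field_simp
  have hrp : r / p < 1 - 2 / (q - 2) / 2 := by
    rw [div_eq_mul_one_div r]
    refine (mul_lt_mul_of_pos_left hpq hr0).trans_le (le_of_eq ?_)
    rw [hr]; field_simp; ring
  obtain ⟨C, hC, hquad⟩ := exists_eLpNorm'_quadraticPhase_sq_le (b := q / 2) (p := r)
    (by linarith) (by rw [hr]; field_simp; ring)
  obtain ⟨D, hD, hlag⟩ := exists_eLpNorm'_lagProduct_indicator_Icc_le (γ := 2 / (q - 2))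
    (by positivity) ((div_lt_one hq2).2 (by linarith)) hr0 hp hrp
  refine ⟨(C * D) ^ (1 / 2 : ℝ), ENNReal.rpow_ne_top_of_nonneg (by norm_num)
    (ENNReal.mul_ne_top hC hD), fun g hg hgi => ?_⟩
  have hext : ∀ z : ℝ × ℝ, ∫ s, 𝐞 (z.2 * s + z.1 * s ^ 2) • (Set.Icc 0 1).indicator g s =
      ∫ s, 𝐞 (z.2 * s + z.1 * s ^ 2) • g s ∂unitVolume := fun z => by
    rw [← integral_indicator measurableSet_Icc]
    congr 1 with s
    by_cases hs : s ∈ Set.Icc (0 : ℝ) 1 <;> simp [hs]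
  have hsq := hquad _ (hg.indicator measurableSet_Icc)
    ((integrable_indicator_iff measurableSet_Icc).2 hgi)
  rw [hγ, div_mul_cancel₀ _ two_ne_zero] at hsq
  simp_rw [hext] at hsq
  rw [← ENNReal.rpow_le_rpow_iff (two_pos : (0 : ℝ) < 2), ENNReal.mul_rpow_of_nonneg _ _ two_pos.le,
    ← ENNReal.rpow_mul, one_div_mul_cancel two_ne_zero, ENNReal.rpow_one, ENNReal.rpow_two,
    ENNReal.rpow_two, mul_assoc]
  exact hsq.trans (mul_le_mul_right (hlag g hg) C)

/-! ### Iterated mixed norms -/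

section MixedNorm

variable {ι : Type*} [DecidableEq ι]

/-- The iterated mixed norm of `G` over the variables in the list, each running over `[0, 1]`: the
variable `i` carries the exponent `p i`, and the norm in the head of the list is taken last. The
result still depends on the variables outside the list. -/
noncomputable def mixedNorm (p : ι → ℝ) : List ι → ((ι → ℝ) → ℝ≥0∞) → (ι → ℝ) → ℝ≥0∞
  | [], G, ξ => G ξ
  | i :: L, G, ξ => eLpNorm' (fun s => mixedNorm p L G (Function.update ξ i s)) (p i) unitVolume

variable {p p' : ι → ℝ} {L : List ι} {G G' : (ι → ℝ) → ℝ≥0∞}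

theorem mixedNorm_append (p : ι → ℝ) (A B : List ι) (G : (ι → ℝ) → ℝ≥0∞) (ξ : ι → ℝ) :
    mixedNorm p (A ++ B) G ξ = mixedNorm p A (mixedNorm p B G) ξ := by
  induction A generalizing ξ with
  | nil => rfl
  | cons i A ih => simp only [List.cons_append, mixedNorm, ih]

theorem mixedNorm_congr_exponent (h : ∀ i ∈ L, p i = p' i) (G : (ι → ℝ) → ℝ≥0∞) (ξ : ι → ℝ) :
    mixedNorm p L G ξ = mixedNorm p' L G ξ := by
  induction L generalizing ξ with
  | nil => rfl
  | cons i L ih =>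
    rw [List.forall_mem_cons] at h
    simp only [mixedNorm, h.1, ih h.2]

theorem mixedNorm_mono_of_eqOn (hp : ∀ i ∈ L, 0 < p i) {ξ : ι → ℝ}
    (h : ∀ ζ : ι → ℝ, (∀ i ∉ L, ζ i = ξ i) → G ζ ≤ G' ζ) :
    mixedNorm p L G ξ ≤ mixedNorm p L G' ξ := by
  induction L generalizing ξ with
  | nil => exact h ξ fun _ _ => rfl
  | cons i L ih =>
    rw [List.forall_mem_cons] at hp
    refine eLpNorm'_mono_enorm hp.1.le fun s => ih hp.2 fun ζ hζ => h ζ fun j hj => ?_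
    rw [List.mem_cons, not_or] at hj
    rw [hζ j hj.2, Function.update_of_ne hj.1]

theorem mixedNorm_mono (hp : ∀ i ∈ L, 0 < p i) (h : ∀ ζ, G ζ ≤ G' ζ) (ξ : ι → ℝ) :
    mixedNorm p L G ξ ≤ mixedNorm p L G' ξ :=
  mixedNorm_mono_of_eqOn hp fun ζ _ => h ζ

theorem mixedNorm_congr_of_eqOn (hp : ∀ i ∈ L, 0 < p i) {ξ : ι → ℝ}
    (h : ∀ ζ : ι → ℝ, (∀ i ∉ L, ζ i = ξ i) → G ζ = G' ζ) :
    mixedNorm p L G ξ = mixedNorm p L G' ξ :=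
  le_antisymm (mixedNorm_mono_of_eqOn hp fun ζ hζ => (h ζ hζ).le)
    (mixedNorm_mono_of_eqOn hp fun ζ hζ => (h ζ hζ).ge)

theorem mixedNorm_const_mul (hp : ∀ i ∈ L, 0 < p i) {C : ℝ≥0∞} (hC : C ≠ ∞)
    (G : (ι → ℝ) → ℝ≥0∞) (ξ : ι → ℝ) :
    mixedNorm p L (fun ζ => C * G ζ) ξ = C * mixedNorm p L G ξ := by
  induction L generalizing ξ with
  | nil => rfl
  | cons i L ih =>
    rw [List.forall_mem_cons] at hp
    simp only [mixedNorm, ih hp.2, eLpNorm'_const_mul _ hC hp.1]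

section Parametrized

variable {α : Type*} [MeasurableSpace α]

theorem measurable_update_comp {u : α → ι → ℝ} (i : ι) {v : α → ℝ} (hu : Measurable u)
    (hv : Measurable v) : Measurable fun a => Function.update (u a) i (v a) :=
  measurable_update'.comp (hu.prodMk hv)

theorem measurable_uncurry_mixedNorm (p : ι → ℝ) (L : List ι) {G : α → (ι → ℝ) → ℝ≥0∞}
    (hG : Measurable (Function.uncurry G)) :
    Measurable (Function.uncurry fun a => mixedNorm p L (G a)) := by
  induction L with
  | nil => exact hG
  | cons i L ih =>
    exact measurable_eLpNorm'_right (α := α × (ι → ℝ))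
      (f := fun z s => mixedNorm p L (G z.1) (Function.update z.2 i s))
      (ih.comp (measurable_fst.fst.prodMk
        (measurable_update_comp i measurable_fst.snd measurable_snd))) (p i)

theorem measurable_mixedNorm (p : ι → ℝ) (L : List ι) (hG : Measurable G) :
    Measurable (mixedNorm p L G) :=
  (measurable_uncurry_mixedNorm p L (G := fun _ : Unit => G)
    (hG.comp measurable_snd)).of_uncurry_left (x := ())

theorem eLpNorm'_mixedNorm_le {μ : Measure α} [SigmaFinite μ] {q : ℝ}
    (hp : ∀ i ∈ L, 0 < p i) (hpq : ∀ i ∈ L, p i ≤ q) {G : α → (ι → ℝ) → ℝ≥0∞}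
    (hG : Measurable (Function.uncurry G)) (ξ : ι → ℝ) :
    eLpNorm' (fun a => mixedNorm p L (G a) ξ) q μ ≤
      mixedNorm p L (fun ζ => eLpNorm' (fun a => G a ζ) q μ) ξ := by
  induction L generalizing ξ with
  | nil => exact le_rfl
  | cons i L ih =>
    rw [List.forall_mem_cons] at hp hpq
    refine (eLpNorm'_eLpNorm'_le_swap ?_ hp.1 hpq.1).trans
      (eLpNorm'_mono_enorm hp.1.le fun s => ih hp.2 hpq.2 _)
    exact (measurable_uncurry_mixedNorm p L hG).comp
      (measurable_fst.prodMk (measurable_update_comp i measurable_const measurable_snd))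

end Parametrized

theorem mixedNorm_le_lmarginal {P : ℝ} (hp : ∀ i ∈ L, 0 < p i) (hP : 0 < P)
    (hpP : ∀ i ∈ L, p i ≤ P) (hL : L.Nodup) (hG : Measurable G) (ξ : ι → ℝ) :
    mixedNorm p L G ξ ≤
      ((∫⋯∫⁻_L.toFinset, (fun ζ => G ζ ^ P) ∂fun _ => unitVolume) ξ) ^ (1 / P) := by
  induction L generalizing ξ with
  | nil =>
    rw [List.toFinset_nil, lmarginal_empty, ← ENNReal.rpow_mul, mul_one_div_cancel hP.ne',
      ENNReal.rpow_one, mixedNorm]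
  | cons i L ih =>
    rw [List.forall_mem_cons] at hp hpP
    rw [List.nodup_cons] at hL
    have hmeas : Measurable fun s => mixedNorm p L G (Function.update ξ i s) :=
      (measurable_mixedNorm p L hG).comp (measurable_update_comp i measurable_const measurable_id)
    rw [List.toFinset_cons, lmarginal_insert _ (hG.pow_const P) (by simpa using hL.1)]
    refine (eLpNorm'_le_eLpNorm'_of_exponent_le hp.1 hpP.1 _ hmeas.aestronglyMeasurable).trans ?_
    refine ENNReal.rpow_le_rpow (lintegral_mono fun s => ?_) (by positivity)
    refine (ENNReal.rpow_le_rpow (ih hp.2 hpP.2 hL.2 _) hP.le).trans_eq ?_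
    rw [← ENNReal.rpow_mul, one_div_mul_cancel hP.ne', ENNReal.rpow_one]

end MixedNorm

/-! ### Adding one variable to a mixed norm bound -/

/-- Bounded measurable functions: the test functions for which all oscillatory integrals below
converge absolutely and may be sliced in every variable. -/
structure BoundedMeasurable {α : Type*} [MeasurableSpace α] (g : α → ℂ) : Prop where
  measurable : Measurable g
  exists_norm_le : ∃ B, ∀ a, ‖g a‖ ≤ B

namespace BoundedMeasurable

variable {α β : Type*} [MeasurableSpace α] [MeasurableSpace β] {g : α → ℂ}

theorem comp (hg : BoundedMeasurable g) {φ : β → α} (hφ : Measurable φ) :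
    BoundedMeasurable fun b => g (φ b) :=
  ⟨hg.measurable.comp hφ, hg.exists_norm_le.imp fun _ hB b => hB (φ b)⟩

theorem integrable (hg : BoundedMeasurable g) (μ : Measure α) [IsFiniteMeasure μ] :
    Integrable g μ :=
  let ⟨B, hB⟩ := hg.exists_norm_le
  .of_bound hg.measurable.aestronglyMeasurable B (Eventually.of_forall hB)

theorem circle_smul (hg : BoundedMeasurable g) {u : α → ℝ} (hu : Measurable u) :
    BoundedMeasurable fun a => 𝐞 (u a) • g a :=
  ⟨Measurable.smul (by fun_prop) hg.measurable,
    hg.exists_norm_le.imp fun B hB a => by simpa only [Circle.norm_smul] using hB a⟩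

theorem integral_right {h : α × β → ℂ} (hh : BoundedMeasurable h) (ν : Measure β)
    [IsProbabilityMeasure ν] : BoundedMeasurable fun a => ∫ b, h (a, b) ∂ν :=
  ⟨hh.measurable.stronglyMeasurable.integral_prod_right'.measurable,
    hh.exists_norm_le.imp fun B hB a => by
      simpa using norm_integral_le_of_norm_le_const (μ := ν)
        (Eventually.of_forall fun b => hB (a, b))⟩

end BoundedMeasurable

theorem exists_eLpNorm'_integral_unitVolume_le {b r : ℝ} (hb : 2 < b) (hrb : 1 / r + 1 / b = 1) :
    ∃ C : ℝ≥0∞, C ≠ ∞ ∧ ∀ g : ℝ → ℂ, Integrable g unitVolume →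
      eLpNorm' (fun x : ℝ => ∫ s, 𝐞 (x * s) • g s ∂unitVolume) b volume ≤
        C * eLpNorm' g r unitVolume := by
  have hb1 : 1 / b < 1 := (div_lt_one (by linarith)).2 (by linarith)
  have hr : 0 < r := one_div_pos.1 (by linarith)
  obtain ⟨C, hC, hHY⟩ := exists_eLpNorm'_fourierInv_le (V := ℝ) (F := ℂ) hb hrb
  refine ⟨C, hC, fun g hgi => ?_⟩
  have h := hHY _ ((integrable_indicator_iff measurableSet_Icc).2 hgi)
  convert h using 1
  · congr 1 with x
    rw [Real.fourierInv_eq, ← integral_indicator measurableSet_Icc]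
    congr 1 with s
    by_cases hs : s ∈ Set.Icc (0 : ℝ) 1 <;> simp [hs]
  · congr 1
    rw [eLpNorm', eLpNorm', ← lintegral_indicator measurableSet_Icc]
    congr 2 with s
    by_cases hs : s ∈ Set.Icc (0 : ℝ) 1 <;> simp [hs, hr]

section AppendVariable

variable {ι : Type*} [DecidableEq ι] {p p' : ι → ℝ} {q : ℝ} {g : (ι → ℝ) → ℂ}

theorem BoundedMeasurable.update (hg : BoundedMeasurable g) (ξ : ι → ℝ) (c : ι) :
    BoundedMeasurable fun s => g (Function.update ξ c s) :=
  hg.comp (measurable_update_comp c measurable_const measurable_id)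

theorem measurable_integral_circle_smul_update {α : Type*} [MeasurableSpace α]
    (hg : Measurable g) (c : ι) {u : α × (ι → ℝ) × ℝ → ℝ} (hu : Measurable u) :
    Measurable fun a : α × (ι → ℝ) =>
      ∫ s, 𝐞 (u (a.1, a.2, s)) • g (Function.update a.2 c s) ∂unitVolume :=
  measurable_integral_circle_smul (u := fun w : (α × (ι → ℝ)) × ℝ => u (w.1.1, w.1.2, w.2))
    (f := fun w => g (Function.update w.1.2 c w.2)) (by fun_prop)
    (hg.comp (measurable_update_comp c measurable_fst.snd measurable_snd))

theorem eLpNorm'_mixedNorm_append_root_le {α : Type*} [MeasurableSpace α] {μ : Measure α}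
    [SigmaFinite μ] {c : ι} {u : α × ℝ → ℝ} (hu : Measurable u) {D : ℝ≥0∞} (hD : D ≠ ∞)
    (hT : ∀ h : ℝ → ℂ, Measurable h → Integrable h unitVolume →
      eLpNorm' (fun z => ∫ s, 𝐞 (u (z, s)) • h s ∂unitVolume) q μ ≤ D * eLpNorm' h (p c) unitVolume)
    {L : List ι} (hp : ∀ i ∈ L, 0 < p i) (hpq : ∀ i ∈ L, p i ≤ q) (hg : BoundedMeasurable g)
    (ξ : ι → ℝ) :
    eLpNorm' (fun z => mixedNorm p L
        (fun ζ => ‖∫ s, 𝐞 (u (z, s)) • g (Function.update ζ c s) ∂unitVolume‖ₑ) ξ) q μ ≤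
      D * mixedNorm p (L ++ [c]) (fun ζ => ‖g ζ‖ₑ) ξ := by
  rw [mixedNorm_append, ← mixedNorm_const_mul hp hD]
  refine (eLpNorm'_mixedNorm_le hp hpq ?_ ξ).trans (mixedNorm_mono hp (fun ζ => ?_) ξ)
  · exact (measurable_integral_circle_smul_update hg.measurable c
      (u := fun w => u (w.1, w.2.2)) (by fun_prop)).enorm
  · have hslice := hg.update ζ c
    simpa only [eLpNorm'_enorm, mixedNorm] using hT _ hslice.measurable (hslice.integrable _)

theorem exists_eLpNorm'_mixedNorm_cons_append_child_le {B : List ι} {l c : ι} (hlB : l ∉ B)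
    (hq : 4 < q) (hpB : ∀ i ∈ B, 0 < p i ∧ p i ≤ q / 2) {r : ℝ} (hr : 0 < r) (hpl : 0 < p l)
    (hrq : 2 * r < q) (hrp : 1 / p l < 1 / r - 1 / q) (hpc : 1 / p c + 2 / q = 1) :
    ∃ C : ℝ≥0∞, C ≠ ∞ ∧ ∀ g : (ι → ℝ) → ℂ, BoundedMeasurable g → ∀ ξ,
      eLpNorm' (fun z : ℝ × ℝ => eLpNorm' (fun s => mixedNorm p B (fun ζ =>
        ‖∫ t, 𝐞 ((z.2 + z.1 * ζ l) * t) • g (Function.update ζ c t) ∂unitVolume‖ₑ)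
          (Function.update ξ l s)) r unitVolume) q volume ≤
      C * mixedNorm p (l :: B ++ [c]) (fun ζ => ‖g ζ‖ₑ) ξ := by
  obtain ⟨C, hC, hxray⟩ := exists_eLpNorm'_comp_lines_le hr hpl hrq hrp
  obtain ⟨D, hD, hHY⟩ := exists_eLpNorm'_integral_unitVolume_le (b := q / 2) (r := p c)
    (by linarith) (by rwa [one_div_div])
  refine ⟨C * D, ENNReal.mul_ne_top hC hD, fun g hg ξ => ?_⟩
  set T : ℝ → (ι → ℝ) → ℂ := fun y ζ => ∫ t, 𝐞 (y * t) • g (Function.update ζ c t) ∂unitVolume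
  set H : ℝ → ℝ → ℝ≥0∞ := fun s y => mixedNorm p B (fun ζ => ‖T y ζ‖ₑ) (Function.update ξ l s)
  have hT : Measurable fun w : ℝ × (ι → ℝ) => ‖T w.1 w.2‖ₑ :=
    (measurable_integral_circle_smul_update hg.measurable c
      (u := fun w => w.1 * w.2.2) (by fun_prop)).enorm
  have hH : Measurable (Function.uncurry H) :=
    (measurable_uncurry_mixedNorm p B (G := fun y ζ => ‖T y ζ‖ₑ) hT).comp
      (f := fun w : ℝ × ℝ => (w.2, Function.update ξ l w.1))
      (measurable_snd.prodMk (measurable_update_comp l measurable_const measurable_fst))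
  have hline : ∀ (z : ℝ × ℝ) (s : ℝ), mixedNorm p B (fun ζ => ‖T (z.2 + z.1 * ζ l) ζ‖ₑ)
      (Function.update ξ l s) = H s (z.2 + z.1 * s) := fun z s =>
    mixedNorm_congr_of_eqOn (fun i hi => (hpB i hi).1) fun ω hω => by
      rw [hω l hlB, Function.update_self]
  have hchild : ∀ s, eLpNorm' (H s) (q / 2) volume ≤
      D * mixedNorm p (B ++ [c]) (fun ζ => ‖g ζ‖ₑ) (Function.update ξ l s) := fun s =>
    eLpNorm'_mixedNorm_append_root_le (u := fun w => w.1 * w.2) (by fun_prop) hD (fun g _ => hHY g)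
      (fun i hi => (hpB i hi).1) (fun i hi => (hpB i hi).2) hg _
  change eLpNorm' (fun z : ℝ × ℝ => eLpNorm' (fun s => mixedNorm p B
    (fun ζ => ‖T (z.2 + z.1 * ζ l) ζ‖ₑ) (Function.update ξ l s)) r unitVolume) q volume ≤ _
  simp only [hline]
  calc eLpNorm' (fun z : ℝ × ℝ => eLpNorm' (fun s => H s (z.2 + z.1 * s)) r unitVolume) q volume
      ≤ C * eLpNorm' (fun s => eLpNorm' (H s) (q / 2) volume) (p l) unitVolume := hxray H hH
    _ ≤ C * eLpNorm' (fun s => D * mixedNorm p (B ++ [c]) (fun ζ => ‖g ζ‖ₑ)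
          (Function.update ξ l s)) (p l) unitVolume := by
        gcongr
        exact eLpNorm'_mono_enorm hpl.le hchild
    _ = C * D * mixedNorm p (l :: B ++ [c]) (fun ζ => ‖g ζ‖ₑ) ξ := by
        rw [eLpNorm'_const_mul _ hD hpl, mul_assoc, List.cons_append, mixedNorm]

theorem exists_eLpNorm'_mixedNorm_append_child_le {A B : List ι} {l c : ι} (hlB : l ∉ B)
    (hq : 4 < q) (hpA : ∀ i ∈ A, 0 < p i ∧ p i ≤ q) (hpB : ∀ i ∈ B, 0 < p i ∧ p i ≤ q / 2)
    (hpl : 0 < p l) (hplq : 2 * p l < q) (hpp' : ∀ i ∈ A ++ B, p i = p' i) (hpl' : 0 < p' l)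
    (hll' : 1 / p' l < 1 / p l - 1 / q) (hpc : 1 / p' c + 2 / q = 1) :
    ∃ C : ℝ≥0∞, C ≠ ∞ ∧ ∀ g : (ι → ℝ) → ℂ, BoundedMeasurable g → ∀ ξ,
      eLpNorm' (fun z : ℝ × ℝ => mixedNorm p (A ++ l :: B) (fun ζ =>
        ‖∫ t, 𝐞 ((z.2 + z.1 * ζ l) * t) • g (Function.update ζ c t) ∂unitVolume‖ₑ) ξ) q volume ≤
      C * mixedNorm p' (A ++ l :: B ++ [c]) (fun ζ => ‖g ζ‖ₑ) ξ := by
  rw [List.forall_mem_append] at hpp'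
  obtain ⟨C, hC, hcons⟩ := exists_eLpNorm'_mixedNorm_cons_append_child_le (p := p') hlB hq
    (fun i hi => hpp'.2 i hi ▸ hpB i hi) hpl hpl' hplq hll' hpc
  refine ⟨C, hC, fun g hg ξ => ?_⟩
  have hp'A : ∀ i ∈ A, 0 < p' i ∧ p' i ≤ q := fun i hi => hpp'.1 i hi ▸ hpA i hi
  have hmeas : Measurable fun w : (ℝ × ℝ) × (ι → ℝ) =>
      ‖∫ t, 𝐞 ((w.1.2 + w.1.1 * w.2 l) * t) • g (Function.update w.2 c t) ∂unitVolume‖ₑ :=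
    (measurable_integral_circle_smul_update hg.measurable c
      (u := fun w : (ℝ × ℝ) × (ι → ℝ) × ℝ => (w.1.2 + w.1.1 * w.2.1 l) * w.2.2)
      (by fun_prop)).enorm
  simp only [mixedNorm_append p, mixedNorm_congr_exponent hpp'.1]
  rw [List.append_assoc, mixedNorm_append p', ← mixedNorm_const_mul (fun i hi => (hp'A i hi).1) hC]
  refine (eLpNorm'_mixedNorm_le (fun i hi => (hp'A i hi).1) (fun i hi => (hp'A i hi).2)
    (measurable_uncurry_mixedNorm p _ hmeas) ξ).trans
    (mixedNorm_mono (fun i hi => (hp'A i hi).1) (fun ζ => ?_) ξ)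
  simp only [mixedNorm, mixedNorm_congr_exponent hpp'.2]
  exact hcons g hg ζ

end AppendVariable

/-! ### Oscillatory integrals attached to monomial systems -/

/-- The quadratic monomial attached to a variable: none, the square of the variable, or its product
with the variable `l`. The label `j : J` names the coordinate form of `Q` equal to the monomial. -/
inductive QuadMonomial (ι J : Type*)
  | linear
  | square (j : J)
  | product (l : ι) (j : J)

namespace QuadMonomial

section Frequencies

variable {ι J : Type*}

/-- The variable multiplying the variable that the monomial is attached to; squares count as having
no parent. -/
def parent : QuadMonomial ι J → Option ι
  | product l _ => some l
  | _ => none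

/-- The label of the monomial. -/
def label : QuadMonomial ι J → Option J
  | linear => none
  | square j => some j
  | product _ j => some j

/-- Distinct variables with a quadratic monomial carry distinct labels, so that each form is a
single monomial. -/
def LabelsInjective (Q : ι → QuadMonomial ι J) : Prop :=
  ∀ ⦃i i' j⦄, (Q i).label = some j → (Q i').label = some j → i = i'

/-- The phase contributed by the variable `i`; the frequency `z` has the coordinates `Sum.inl i`
dual to the variables and `Sum.inr j` dual to the forms. -/
def phase (Q : ι → QuadMonomial ι J) (i : ι) (z : ι ⊕ J → ℝ) (ξ : ι → ℝ) : ℝ :=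
  z (.inl i) * ξ i + match Q i with
    | linear => 0
    | square j => z (.inr j) * ξ i ^ 2
    | product l j => z (.inr j) * (ξ l * ξ i)

theorem measurable_phase (Q : ι → QuadMonomial ι J) (i : ι) :
    Measurable fun w : (ι ⊕ J → ℝ) × (ι → ℝ) => phase Q i w.1 w.2 := by
  unfold phase
  cases Q i <;> fun_prop

variable [DecidableEq ι] [DecidableEq J] {Q : ι → QuadMonomial ι J}

/-- The frequency coordinates that the phase of the variable `i` involves. -/
def freq (Q : ι → QuadMonomial ι J) (i : ι) : Finset (ι ⊕ J) :=
  insert (.inl i) ((Q i).label.toFinset.map .inr)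

theorem phase_congr {i : ι} {z z' : ι ⊕ J → ℝ} (h : ∀ a ∈ freq Q i, z a = z' a) (ξ : ι → ℝ) :
    phase Q i z ξ = phase Q i z' ξ := by
  simp only [freq, Finset.mem_insert, forall_eq_or_imp] at h
  unfold phase
  rw [h.1]
  cases hQ : Q i <;> simp_all [label]

theorem disjoint_freq (hQ : LabelsInjective Q) {i i' : ι} (h : i ≠ i') :
    Disjoint (freq Q i) (freq Q i') := by
  have hlabel : ∀ j, (Q i).label = some j → (Q i').label ≠ some j := fun j hi hi' => h (hQ hi hi')
  rw [Finset.disjoint_left]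
  rintro (a | j) ha ha' <;> simp_all [freq]

end Frequencies

section Oscillatory

variable {ι J : Type*} [DecidableEq ι] {Q : ι → QuadMonomial ι J}

/-- Integration of `g` in the single variable `i` against the phase of `i`. -/
noncomputable def oscInt (Q : ι → QuadMonomial ι J) (i : ι) (z : ι ⊕ J → ℝ) (g : (ι → ℝ) → ℂ)
    (ξ : ι → ℝ) : ℂ :=
  ∫ s, 𝐞 (phase Q i z (Function.update ξ i s)) • g (Function.update ξ i s) ∂unitVolume

/-- Iterated integration of `g` in the variables of a list, the head of the list being integrated
last, against the phases of these variables. -/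
noncomputable def iterOscInt (Q : ι → QuadMonomial ι J) (L : List ι) (z : ι ⊕ J → ℝ)
    (g : (ι → ℝ) → ℂ) : (ι → ℝ) → ℂ :=
  L.foldr (fun i => oscInt Q i z) g

theorem iterOscInt_append_singleton (L : List ι) (c : ι) (z : ι ⊕ J → ℝ) (g : (ι → ℝ) → ℂ) :
    iterOscInt Q (L ++ [c]) z g = iterOscInt Q L z (oscInt Q c z g) := by
  simp only [iterOscInt, List.foldr_append, List.foldr_cons, List.foldr_nil]

theorem measurable_oscInt (i : ι) {g : (ι ⊕ J → ℝ) → (ι → ℝ) → ℂ}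
    (hg : Measurable (Function.uncurry g)) :
    Measurable (Function.uncurry fun z => oscInt Q i z (g z)) := by
  have hup : Measurable fun w : ((ι ⊕ J → ℝ) × (ι → ℝ)) × ℝ =>
      (w.1.1, Function.update w.1.2 i w.2) :=
    measurable_fst.fst.prodMk (measurable_update_comp i measurable_fst.snd measurable_snd)
  exact measurable_integral_circle_smul
    (u := fun w : ((ι ⊕ J → ℝ) × (ι → ℝ)) × ℝ =>
      phase Q i w.1.1 (Function.update w.1.2 i w.2))
    (f := fun w => g w.1.1 (Function.update w.1.2 i w.2))
    ((measurable_phase Q i).comp hup) (hg.comp hup)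

theorem measurable_iterOscInt (L : List ι) {g : (ι ⊕ J → ℝ) → (ι → ℝ) → ℂ}
    (hg : Measurable (Function.uncurry g)) :
    Measurable (Function.uncurry fun z => iterOscInt Q L z (g z)) := by
  induction L with
  | nil => exact hg
  | cons i L ih => exact measurable_oscInt i ih

theorem boundedMeasurable_oscInt (i : ι) (z : ι ⊕ J → ℝ) {g : (ι → ℝ) → ℂ}
    (hg : BoundedMeasurable g) : BoundedMeasurable (oscInt Q i z g) := by
  have hup : Measurable fun w : (ι → ℝ) × ℝ => Function.update w.1 i w.2 :=
    measurable_update_comp i measurable_fst measurable_snd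
  exact ((hg.comp hup).circle_smul
    ((measurable_phase Q i).comp (measurable_const.prodMk hup))).integral_right unitVolume

theorem measurable_mixedNorm_oscInt (p : ι → ℝ) (L : List ι) (c : ι) {g : (ι → ℝ) → ℂ}
    (hg : Measurable g) (ξ : ι → ℝ) :
    Measurable fun z => mixedNorm p L (fun ζ => ‖oscInt Q c z g ζ‖ₑ) ξ :=
  (measurable_uncurry_mixedNorm p L (G := fun z ζ => ‖oscInt Q c z g ζ‖ₑ)
    (measurable_oscInt c (g := fun _ => g) (hg.comp measurable_snd)).enorm).of_uncurry_right

variable [DecidableEq J]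

theorem oscInt_congr {i : ι} {z z' : ι ⊕ J → ℝ} (h : ∀ a ∈ freq Q i, z a = z' a)
    (g : (ι → ℝ) → ℂ) : oscInt Q i z g = oscInt Q i z' g := by
  ext ξ
  simp only [oscInt, phase_congr h]

/-- The frequency coordinates that the phases of the variables of a list involve. -/
def freqs (Q : ι → QuadMonomial ι J) (L : List ι) : Finset (ι ⊕ J) :=
  L.toFinset.biUnion (freq Q)

/-- The `L^q` norm, in the frequencies of the variables of `L`, of the iterated integral over `L` is
controlled by a mixed norm with exponents `p`. -/
def MixedNormBound (Q : ι → QuadMonomial ι J) (q : ℝ) (L : List ι) (p : ι → ℝ) : Prop :=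
  ∃ C : ℝ≥0∞, C ≠ ∞ ∧ ∀ g : (ι → ℝ) → ℂ, BoundedMeasurable g → ∀ ξ z,
    ((∫⋯∫⁻_freqs Q L, fun z => ‖iterOscInt Q L z g ξ‖ₑ ^ q) z) ^ (1 / q) ≤
      C * mixedNorm p L (fun ζ => ‖g ζ‖ₑ) ξ

theorem mixedNormBound_nil {q : ℝ} (hq : 0 < q) (p : ι → ℝ) : MixedNormBound Q q [] p := by
  refine ⟨1, ENNReal.one_ne_top, fun g _ ξ z => ?_⟩
  rw [freqs, List.toFinset_nil, Finset.biUnion_empty, lmarginal_empty, ← ENNReal.rpow_mul,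
    mul_one_div_cancel hq.ne', ENNReal.rpow_one, one_mul, iterOscInt, mixedNorm, List.foldr_nil]

theorem lmarginal_iterOscInt_append_singleton {q : ℝ} {L : List ι} {c : ι}
    (hdisj : Disjoint (freq Q c) (freqs Q L)) {g : (ι → ℝ) → ℂ} (hg : Measurable g) (ξ : ι → ℝ)
    (z : ι ⊕ J → ℝ) :
    (∫⋯∫⁻_freqs Q (L ++ [c]), fun z => ‖iterOscInt Q (L ++ [c]) z g ξ‖ₑ ^ q) z =
      (∫⋯∫⁻_freq Q c, fun z =>
        (∫⋯∫⁻_freqs Q L, fun z' => ‖iterOscInt Q L z' (oscInt Q c z g) ξ‖ₑ ^ q) z) z := by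
  have hfreqs : freqs Q (L ++ [c]) = freq Q c ∪ freqs Q L := by
    ext; simp [freqs]
  have hmeas : Measurable fun z => ‖iterOscInt Q (L ++ [c]) z g ξ‖ₑ ^ q :=
    ((measurable_iterOscInt (L ++ [c]) (g := fun _ => g)
      (hg.comp measurable_snd)).of_uncurry_right.enorm).pow_const q
  rw [hfreqs, lmarginal_union _ _ hmeas hdisj]
  congr 1 with z
  refine lintegral_congr fun y => ?_
  beta_reduce
  rw [iterOscInt_append_singleton, oscInt_congr (z' := z) fun a ha => ?_]
  simp [Function.updateFinset, Finset.disjoint_left.1 hdisj ha]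

theorem MixedNormBound.append_singleton {q : ℝ} (hq : 0 < q) {L : List ι} {c : ι} {p p' : ι → ℝ}
    (hL : MixedNormBound Q q L p) (hdisj : Disjoint (freq Q c) (freqs Q L))
    (hc : ∃ D : ℝ≥0∞, D ≠ ∞ ∧ ∀ g : (ι → ℝ) → ℂ, BoundedMeasurable g → ∀ ξ z,
      ((∫⋯∫⁻_freq Q c, fun z => mixedNorm p L (fun ζ => ‖oscInt Q c z g ζ‖ₑ) ξ ^ q) z) ^ (1 / q) ≤
        D * mixedNorm p' (L ++ [c]) (fun ζ => ‖g ζ‖ₑ) ξ) :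
    MixedNormBound Q q (L ++ [c]) p' := by
  obtain ⟨C, hC, hL⟩ := hL
  obtain ⟨D, hD, hc⟩ := hc
  refine ⟨C * D, ENNReal.mul_ne_top hC hD, fun g hg ξ z => ?_⟩
  rw [lmarginal_iterOscInt_append_singleton hdisj hg.measurable]
  have hinner : ∀ z, (∫⋯∫⁻_freqs Q L, fun z' => ‖iterOscInt Q L z' (oscInt Q c z g) ξ‖ₑ ^ q) z ≤
      C ^ q * mixedNorm p L (fun ζ => ‖oscInt Q c z g ζ‖ₑ) ξ ^ q := fun z => by
    rw [← ENNReal.mul_rpow_of_nonneg _ _ hq.le, ← ENNReal.rpow_inv_le_iff hq, ← one_div]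
    exact hL _ (boundedMeasurable_oscInt c z hg) ξ z
  calc _ ≤ ((∫⋯∫⁻_freq Q c, fun z =>
        C ^ q * mixedNorm p L (fun ζ => ‖oscInt Q c z g ζ‖ₑ) ξ ^ q) z) ^ (1 / q) := by
        gcongr; exact lmarginal_mono hinner z
    _ = C * ((∫⋯∫⁻_freq Q c, fun z => mixedNorm p L (fun ζ => ‖oscInt Q c z g ζ‖ₑ) ξ ^ q) z) ^
        (1 / q) := by
        rw [lmarginal, lintegral_const_mul' _ _ (by finiteness),
          ENNReal.mul_rpow_of_nonneg _ _ (by positivity), ← ENNReal.rpow_mul,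
          mul_one_div_cancel hq.ne', ENNReal.rpow_one, lmarginal]
    _ ≤ C * D * mixedNorm p' (L ++ [c]) (fun ζ => ‖g ζ‖ₑ) ξ := by
        rw [mul_assoc]; gcongr; exact hc g hg ξ z

end Oscillatory

end QuadMonomial

namespace QuadMonomial

section AppendBound

variable {ι J : Type*} [DecidableEq ι] [DecidableEq J] {Q : ι → QuadMonomial ι J} {q : ℝ}
  {p p' : ι → ℝ} {L : List ι} {c : ι}

theorem MixedNormBound.congr_exponent (hL : MixedNormBound Q q L p) (h : ∀ i ∈ L, p i = p' i) :
    MixedNormBound Q q L p' := by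
  simpa only [MixedNormBound, mixedNorm_congr_exponent h] using hL

theorem lmarginal_freq_linear (hc : Q c = linear) (F : (ι ⊕ J → ℝ) → ℝ≥0∞) (z : ι ⊕ J → ℝ) :
    ((∫⋯∫⁻_freq Q c, fun z => F z ^ q) z) ^ (1 / q) =
      eLpNorm' (fun x => F (Function.update z (.inl c) x)) q volume := by
  have hfreq : freq Q c = {.inl c} := by simp [freq, label, hc]
  simp only [hfreq, lmarginal_singleton, eLpNorm', enorm_eq_self]

theorem lmarginal_freq_of_label {j : J} (hc : (Q c).label = some j) {F : (ι ⊕ J → ℝ) → ℝ≥0∞}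
    (hF : Measurable F) (z : ι ⊕ J → ℝ) :
    ((∫⋯∫⁻_freq Q c, fun z => F z ^ q) z) ^ (1 / q) =
      eLpNorm' (fun w : ℝ × ℝ =>
        F (Function.update (Function.update z (.inr j) w.1) (.inl c) w.2)) q volume := by
  have hfreq : freq Q c = {.inl c, .inr j} := by simp [freq, hc]
  have hFw : Measurable fun w : ℝ × ℝ =>
      F (Function.update (Function.update z (.inr j) w.1) (.inl c) w.2) ^ q :=
    (hF.comp (measurable_update_comp _ (measurable_update_comp _ measurable_const measurable_fst)
      measurable_snd)).pow_const q
  rw [hfreq, lmarginal_insert' _ (hF.pow_const q) (by simp), lmarginal_singleton]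
  simp only [eLpNorm', enorm_eq_self]
  rw [Measure.volume_eq_prod, lintegral_prod _ hFw.aemeasurable]

theorem MixedNormBound.append_linear (hL : MixedNormBound Q q L p) (hc : Q c = linear)
    (hdisj : Disjoint (freq Q c) (freqs Q L)) (hq : 2 < q) (hp : ∀ i ∈ L, 0 < p i ∧ p i ≤ q)
    (hpc : 1 / p c + 1 / q = 1) : MixedNormBound Q q (L ++ [c]) p := by
  obtain ⟨D, hD, hHY⟩ := exists_eLpNorm'_integral_unitVolume_le hq hpc
  refine hL.append_singleton (by linarith) hdisj ⟨D, hD, fun g hg ξ z => ?_⟩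
  rw [lmarginal_freq_linear hc]
  simpa [oscInt, phase, hc] using eLpNorm'_mixedNorm_append_root_le (u := fun w => w.1 * w.2)
    (by fun_prop) hD (fun g _ => hHY g) (fun i hi => (hp i hi).1) (fun i hi => (hp i hi).2) hg ξ

theorem MixedNormBound.append_square (hL : MixedNormBound Q q L p) {j : J} (hc : Q c = square j)
    (hdisj : Disjoint (freq Q c) (freqs Q L)) (hq : 4 < q) (hp : ∀ i ∈ L, 0 < p i ∧ p i ≤ q)
    (hpc : 0 < p c) (hpcq : 1 / p c < 1 - 3 / q) : MixedNormBound Q q (L ++ [c]) p := by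
  obtain ⟨D, hD, hparabola⟩ := exists_eLpNorm'_parabola_le hq hpc hpcq
  refine hL.append_singleton (by linarith) hdisj ⟨D, hD, fun g hg ξ z => ?_⟩
  rw [lmarginal_freq_of_label (by rw [hc, label])
    (measurable_mixedNorm_oscInt p L c hg.measurable ξ)]
  simpa [oscInt, phase, hc] using eLpNorm'_mixedNorm_append_root_le
    (u := fun w : (ℝ × ℝ) × ℝ => w.1.2 * w.2 + w.1.1 * w.2 ^ 2) (by fun_prop) hD hparabola
    (fun i hi => (hp i hi).1) (fun i hi => (hp i hi).2) hg ξ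

theorem MixedNormBound.append_product {A B : List ι} {l : ι} {j : J}
    (hL : MixedNormBound Q q (A ++ l :: B) p) (hc : Q c = product l j) (hlc : l ≠ c) (hlB : l ∉ B)
    (hdisj : Disjoint (freq Q c) (freqs Q (A ++ l :: B))) (hq : 4 < q)
    (hpA : ∀ i ∈ A, 0 < p i ∧ p i ≤ q) (hpB : ∀ i ∈ B, 0 < p i ∧ p i ≤ q / 2) (hpl : 0 < p l)
    (hplq : 2 * p l < q) (hpp' : ∀ i ∈ A ++ B, p i = p' i) (hpl' : 0 < p' l)
    (hll' : 1 / p' l < 1 / p l - 1 / q) (hpc : 1 / p' c + 2 / q = 1) :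
    MixedNormBound Q q (A ++ l :: B ++ [c]) p' := by
  obtain ⟨D, hD, hchild⟩ := exists_eLpNorm'_mixedNorm_append_child_le hlB hq hpA hpB hpl hplq hpp'
    hpl' hll' hpc
  refine hL.append_singleton (by linarith) hdisj ⟨D, hD, fun g hg ξ z => ?_⟩
  rw [lmarginal_freq_of_label (by rw [hc, label])
    (measurable_mixedNorm_oscInt p _ c hg.measurable ξ)]
  simpa [oscInt, phase, hc, hlc, add_mul, mul_assoc] using hchild g hg ξ

end AppendBound

end QuadMonomial

/-! ### Breadth-first orderings of a forest -/

section BreadthFirst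

variable {ι : Type*} {par : ι → Option ι} {R L : List ι}

/-- `IsBreadthFirst par R L` says that `L` is an initial segment of a breadth-first traversal of the
forest with parent function `par`, starting from the list `R` of roots: each further vertex `c` is
appended after its parent `l`, at a time when no vertex to the right of `l` has a child yet. -/
inductive IsBreadthFirst (par : ι → Option ι) (R : List ι) : List ι → Prop
  | roots : IsBreadthFirst par R R
  | child {A B : List ι} {l c : ι} (h : IsBreadthFirst par R (A ++ l :: B)) (hc : par c = some l)
      (hcL : c ∉ A ++ l :: B) (hpar : ∀ a ∈ A ++ l :: B, ∀ i, par a = some i → i ∈ A ++ [l]) :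
      IsBreadthFirst par R (A ++ l :: B ++ [c])

namespace IsBreadthFirst

theorem nodup (h : IsBreadthFirst par R L) (hR : R.Nodup) : L.Nodup := by
  induction h with
  | roots => exact hR
  | child _ _ hcL _ ih =>
    exact ih.append (List.nodup_singleton _) (List.disjoint_singleton.2 hcL)

theorem parents_precede (h : IsBreadthFirst par R L) (hR : ∀ i ∈ R, par i = none) :
    L.Pairwise fun i i' => par i ≠ some i' := by
  induction h with
  | roots => exact List.pairwise_of_forall_mem_list fun i hi _ _ => by simp [hR i hi]
  | @child A B l c _ _ hcL hpar ih =>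
    refine List.pairwise_append.2 ⟨ih, List.pairwise_singleton _ _, fun a ha c' hc' hac => hcL ?_⟩
    rw [List.mem_singleton] at hc'
    have hcA := hpar a ha c (hc' ▸ hac)
    simp only [List.mem_append, List.mem_cons] at hcA ⊢
    tauto

theorem append_children {A B cs : List ι} {l : ι} (h : IsBreadthFirst par R (A ++ l :: B))
    (hpar : ∀ a ∈ A ++ l :: B, ∀ i, par a = some i → i ∈ A ++ [l]) (hcs : cs.Nodup)
    (hcsl : ∀ c ∈ cs, par c = some l ∧ c ∉ A ++ l :: B) :
    IsBreadthFirst par R (A ++ l :: (B ++ cs)) ∧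
      ∀ a ∈ A ++ l :: (B ++ cs), ∀ i, par a = some i → i ∈ A ++ [l] := by
  induction cs using List.reverseRecOn with
  | nil => simpa using ⟨h, by simpa using hpar⟩
  | append_singleton cs c ih =>
    rw [List.nodup_append_comm, List.singleton_append, List.nodup_cons] at hcs
    simp only [List.forall_mem_append, List.forall_mem_singleton] at hcsl
    obtain ⟨hbf, hpar'⟩ := ih hcs.2 hcsl.1
    have hc : c ∉ A ++ l :: (B ++ cs) := by simp_all
    have happend : A ++ l :: (B ++ (cs ++ [c])) = A ++ l :: (B ++ cs) ++ [c] := by simp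
    rw [happend, List.forall_mem_append, List.forall_mem_singleton]
    exact ⟨hbf.child hcsl.2.1 hc hpar', hpar', fun i hi => by simp_all⟩

theorem exists_extend [Finite ι] (hR : R.Nodup) {P F : List ι}
    (h : IsBreadthFirst par R (P ++ F))
    (hpar : ∀ a ∈ P ++ F, ∀ i, par a = some i → i ∈ P)
    (hchild : ∀ l ∈ P, ∀ c, par c = some l → c ∈ P ++ F) :
    ∃ L, IsBreadthFirst par R L ∧ P ++ F ⊆ L ∧ ∀ l ∈ L, ∀ c, par c = some l → c ∈ L := by
  classical
  cases nonempty_fintype ι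
  induction hn : Fintype.card ι - P.length using Nat.strong_induction_on generalizing P F with
  | _ n ih =>
  cases F with
  | nil => exact ⟨P, by simpa using h, by simp, by simpa using hchild⟩
  | cons l F =>
    have hnodup := h.nodup hR
    have hlP : l ∉ P := fun hl => (List.nodup_append'.1 hnodup).2.2 hl List.mem_cons_self
    have hcard := hnodup.length_le_card
    rw [List.length_append, List.length_cons] at hcard
    have hmem : ∀ c, c ∈ ({c | par c = some l} : Finset ι).toList ↔ par c = some l := by simp
    obtain ⟨hbf, hpar'⟩ := h.append_children (cs := ({c | par c = some l} : Finset ι).toList)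
      (fun a ha i hi => List.mem_append_left _ (hpar a ha i hi)) (Finset.nodup_toList _)
      fun c hc => ⟨(hmem c).1 hc, fun hcPF => hlP (hpar c hcPF l ((hmem c).1 hc))⟩
    rw [List.append_cons] at hbf hpar'
    obtain ⟨L, hL, hPL, hchildL⟩ := ih _ (by grind) hbf hpar' (by grind) rfl
    exact ⟨L, hL, fun a ha => hPL (by grind), hchildL⟩

theorem exists_forall_mem [Finite ι] (hR : R.Nodup)
    (hroots : ∀ i, i ∈ R ↔ par i = none) (hwf : WellFounded fun j i => par i = some j) :
    ∃ L, IsBreadthFirst par R L ∧ ∀ i, i ∈ L := by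
  obtain ⟨L, hL, hRL, hchild⟩ := exists_extend (par := par) (P := []) (F := R) hR roots
    (fun a ha i hi => by simp_all) (by simp)
  refine ⟨L, hL, fun i => ?_⟩
  induction i using hwf.induction with
  | h i ih =>
    cases hi : par i with
    | none => exact hRL ((hroots i).2 hi)
    | some j => exact hchild j (ih j hi) i hi

end IsBreadthFirst

end BreadthFirst

/-! ### Mixed norm bounds along a breadth-first ordering -/

namespace QuadMonomial

section Exponents

variable {ι J : Type*} {Q : ι → QuadMonomial ι J} {S T : Finset ι} {c i l : ι}
  {j : J}

/-- The variable multiplying the variable `i` in its monomial; unlike `parent`, it is `i` itself for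
a square. -/
def partner (Q : ι → QuadMonomial ι J) (i : ι) : Option ι :=
  match Q i with
  | linear => none
  | square _ => some i
  | product l _ => some l

theorem partner_eq_some_iff :
    partner Q c = some i ↔ (Q c).parent = some i ∨ c = i ∧ ∃ j, Q c = square j := by
  unfold partner parent
  cases Q c <;> simp

variable [DecidableEq ι]

/-- The number of monomials attached to variables in `S` in which `i` is the partner. -/
def multiplicity (Q : ι → QuadMonomial ι J) (S : Finset ι) (i : ι) : ℕ :=
  (S.filter fun c => partner Q c = some i).card

theorem multiplicity_mono (hST : S ⊆ T) (i : ι) : multiplicity Q S i ≤ multiplicity Q T i :=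
  Finset.card_le_card (Finset.filter_subset_filter _ hST)

theorem multiplicity_insert_of_eq (hcS : c ∉ S) (hc : partner Q c = some i) :
    multiplicity Q (insert c S) i = multiplicity Q S i + 1 := by
  rw [multiplicity, Finset.filter_insert, if_pos hc, Finset.card_insert_of_notMem (by simp [hcS]),
    multiplicity]

theorem multiplicity_insert_of_ne (hc : partner Q c ≠ some i) :
    multiplicity Q (insert c S) i = multiplicity Q S i := by
  rw [multiplicity, Finset.filter_insert, if_neg hc, multiplicity]

theorem multiplicity_eq_zero (hparent : ∀ a ∈ S, (Q a).parent ≠ some i)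
    (hi : ∀ j, Q i = square j → i ∉ S) : multiplicity Q S i = 0 := by
  rw [multiplicity, Finset.card_eq_zero, Finset.filter_eq_empty_iff]
  rintro a ha hai
  obtain h | ⟨rfl, j, hj⟩ := partner_eq_some_iff.1 hai
  exacts [hparent a ha h, hi j hj ha]

theorem multiplicity_le_one (hparent : ∀ a ∈ S, (Q a).parent ≠ some i) :
    multiplicity Q S i ≤ 1 := by
  refine Finset.card_le_one.2 fun a ha b hb => ?_
  simp only [Finset.mem_filter, partner_eq_some_iff] at ha hb
  exact (ha.2.resolve_left (hparent a ha.1)).1.trans (hb.2.resolve_left (hparent b hb.1)).1.symm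

variable [DecidableEq J]

/-- The reciprocal of the Lebesgue exponent of the variable `i` once the variables in `S` have been
treated. Each of the `#(freq Q i)` frequencies of `i` costs `1 / q`, and each further monomial with
partner `i` costs `1 / q + δ`; the loss `δ` makes up for the open range of exponents in the X-ray
and parabola estimates. -/
noncomputable def exponentInv (Q : ι → QuadMonomial ι J) (q δ : ℝ) (S : Finset ι) (i : ι) : ℝ :=
  1 - (multiplicity Q S i + (freq Q i).card) / q - multiplicity Q S i * δ

variable {q δ : ℝ}

theorem card_freq_linear (hc : Q c = linear) : (freq Q c).card = 1 := by
  simp [freq, hc, label]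

theorem card_freq_of_label (hc : (Q c).label = some j) : (freq Q c).card = 2 := by
  simp [freq, hc]

theorem exponentInv_anti (hq : 0 < q) (hδ : 0 ≤ δ) (hST : S ⊆ T) (i : ι) :
    exponentInv Q q δ T i ≤ exponentInv Q q δ S i := by
  unfold exponentInv
  gcongr <;> exact multiplicity_mono hST i

theorem exponentInv_insert_of_eq (hcS : c ∉ S) (hc : partner Q c = some i) :
    exponentInv Q q δ (insert c S) i = exponentInv Q q δ S i - 1 / q - δ := by
  rw [exponentInv, multiplicity_insert_of_eq hcS hc, exponentInv]
  push_cast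
  ring

theorem exponentInv_insert_of_ne (hc : partner Q c ≠ some i) :
    exponentInv Q q δ (insert c S) i = exponentInv Q q δ S i := by
  rw [exponentInv, multiplicity_insert_of_ne hc, exponentInv]

theorem exponentInv_linear (hc : Q c = linear) (hparent : ∀ a ∈ S, (Q a).parent ≠ some c) :
    exponentInv Q q δ S c = 1 - 1 / q := by
  rw [exponentInv, multiplicity_eq_zero hparent (by simp [hc]), card_freq_linear hc]
  simp

theorem exponentInv_product (hc : Q c = product l j) (hparent : ∀ a ∈ S, (Q a).parent ≠ some c) :
    exponentInv Q q δ S c = 1 - 2 / q := by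
  rw [exponentInv, multiplicity_eq_zero hparent (by simp [hc]),
    card_freq_of_label (j := j) (by rw [hc, label])]
  simp

theorem le_exponentInv_square (hq : 0 < q) (hδ : 0 ≤ δ) (hc : Q c = square j)
    (hparent : ∀ a ∈ S, (Q a).parent ≠ some c) : 1 - 3 / q - δ ≤ exponentInv Q q δ S c := by
  have hmult : (multiplicity Q S c : ℝ) ≤ 1 := mod_cast multiplicity_le_one hparent
  rw [exponentInv, card_freq_of_label (j := j) (by rw [hc, label])]
  push_cast
  rw [show 1 - 3 / q - δ = 1 - (1 + 2) / q - 1 * δ by ring]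
  gcongr

theorem exponentInv_le (hq : 0 < q) (hδ : 0 ≤ δ) (S : Finset ι) (i : ι) :
    exponentInv Q q δ S i ≤ 1 - (freq Q i).card / q := by
  have : (0 : ℝ) ≤ multiplicity Q S i / q := by positivity
  have : (0 : ℝ) ≤ multiplicity Q S i * δ := by positivity
  rw [exponentInv, add_div]
  linarith

end Exponents

section BreadthFirstBound

variable {ι J : Type*} [DecidableEq ι] [DecidableEq J] {Q : ι → QuadMonomial ι J} {q δ : ℝ}
  {R L : List ι}

/-- In the list `L`, the variables whose square is a form come before all other variables. -/
def SquaresFirst (Q : ι → QuadMonomial ι J) (L : List ι) : Prop :=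
  L.Pairwise fun i i' => (∃ j, Q i' = square j) → ∃ j, Q i = square j

theorem disjoint_freq_freqs (hQ : LabelsInjective Q) {c : ι}
    (hc : c ∉ L) : Disjoint (freq Q c) (freqs Q L) := by
  rw [freqs, Finset.disjoint_biUnion_right]
  exact fun i hi => disjoint_freq hQ fun hci => hc (by simpa [hci] using hi)

theorem inv_pos_and_inv_le_of_div_le {a e : ℝ} (ha : 0 < a) (hq : 0 < q) (h : a / q ≤ e) :
    0 < e⁻¹ ∧ e⁻¹ ≤ q / a := by
  have haq : 0 < a / q := by positivity
  exact ⟨inv_pos.2 (haq.trans_le h), by simpa using inv_anti₀ haq h⟩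

theorem mixedNormBound_roots (hQ : LabelsInjective Q) (hq : 4 < q) (hδ : 0 < δ) (hR : R.Nodup)
    (hroots : ∀ i ∈ R, (Q i).parent = none)
    (hadm : ∀ i ∈ R, 1 / q ≤ exponentInv Q q δ R.toFinset i) :
    MixedNormBound Q q R fun i => (exponentInv Q q δ R.toFinset i)⁻¹ := by
  induction R using List.reverseRecOn with
  | nil => exact mixedNormBound_nil (by linarith) _
  | append_singleton R c ih =>
    have hinsert : (R ++ [c]).toFinset = insert c R.toFinset := by ext; simp
    simp only [hinsert, List.forall_mem_append, List.forall_mem_singleton] at hroots hadm ⊢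
    rw [List.nodup_append_comm, List.singleton_append, List.nodup_cons] at hR
    have hcR : c ∉ R.toFinset := by simpa using hR.1
    have hkeep : ∀ i ∈ R, exponentInv Q q δ (insert c R.toFinset) i =
        exponentInv Q q δ R.toFinset i := fun i hi =>
      exponentInv_insert_of_ne fun h => by
        obtain h | ⟨rfl, -⟩ := partner_eq_some_iff.1 h
        exacts [by simp [hroots.2] at h, hR.1 hi]
    have hbound := (ih hR.2 hroots.1 fun i hi => hkeep i hi ▸ hadm.1 i hi).congr_exponent
      fun i hi => by rw [← hkeep i hi]
    have hdisj := disjoint_freq_freqs hQ hR.1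
    have hp : ∀ i ∈ R, 0 < (exponentInv Q q δ (insert c R.toFinset) i)⁻¹ ∧
        (exponentInv Q q δ (insert c R.toFinset) i)⁻¹ ≤ q := fun i hi => by
      simpa using inv_pos_and_inv_le_of_div_le one_pos (by linarith) (hadm.1 i hi)
    cases hc : Q c with
    | product l j => simp [hc, parent] at hroots
    | linear =>
      refine hbound.append_linear hc hdisj (by linarith) hp ?_
      rw [one_div, inv_inv, exponentInv_linear hc (by simp_all), sub_add_cancel]
    | square j =>
      refine hbound.append_square hc hdisj hq hp
        (inv_pos_and_inv_le_of_div_le one_pos (by linarith) hadm.2).1 ?_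
      have hle := exponentInv_le (Q := Q) (show 0 < q by linarith) hδ.le R.toFinset c
      rw [card_freq_of_label (j := j) (by rw [hc, label])] at hle
      rw [one_div, inv_inv, exponentInv_insert_of_eq hcR (by rw [partner, hc])]
      push_cast at hle
      linarith [show 3 / q = 2 / q + 1 / q by ring]

theorem two_div_le_exponentInv_of_childless [Fintype ι] (hq : 4 < q) (hδ : 0 < δ)
    (hadm : ∀ i, 1 / q ≤ exponentInv Q q δ Finset.univ i) {S : Finset ι} {l c i : ι} {j : J}
    (hi : ∀ a ∈ S, (Q a).parent ≠ some i) (hc : Q c = product l j)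
    (hsq : (∃ j, Q i = square j) → ∃ j, Q l = square j) :
    2 / q ≤ exponentInv Q q δ S i := by
  have hq0 : 0 < q := by linarith
  have hdiv : 4 / q < 1 := (div_lt_one hq0).2 hq
  cases hQi : Q i with
  | linear =>
    rw [exponentInv_linear hQi hi]
    linarith [show 4 / q = 2 / q + 2 * (1 / q) by ring, one_div_pos.2 hq0]
  | product l' j' =>
    rw [exponentInv_product hQi hi]
    linarith [show 4 / q = 2 / q + 2 / q by ring]
  | square j' =>
    obtain ⟨j'', hl⟩ := hsq ⟨j', hQi⟩
    have hcl : c ∉ ({l} : Finset ι) := by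
      rw [Finset.mem_singleton]; rintro rfl; simp [hc] at hl
    have hle := (hadm l).trans
      (exponentInv_anti hq0 hδ.le (Finset.subset_univ (insert c {l})) l)
    rw [exponentInv_insert_of_eq hcl (by rw [partner, hc]), ← insert_empty_eq l,
      exponentInv_insert_of_eq (by simp) (by rw [partner, hl])] at hle
    have hempty := exponentInv_le (Q := Q) hq0 hδ.le ∅ l
    rw [card_freq_of_label (j := j'') (by rw [hl, label])] at hempty
    push_cast at hempty
    have hsquare := le_exponentInv_square hq0 hδ.le hQi hi
    linarith [show 3 / q = 3 * (1 / q) by ring, show 2 / q = 2 * (1 / q) by ring]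

theorem inv_exponentInv_pos_and_le [Fintype ι] (hq : 0 < q) (hδ : 0 ≤ δ)
    (hadm : ∀ i, 1 / q ≤ exponentInv Q q δ Finset.univ i) (S : Finset ι) (i : ι) :
    0 < (exponentInv Q q δ S i)⁻¹ ∧ (exponentInv Q q δ S i)⁻¹ ≤ q := by
  simpa using inv_pos_and_inv_le_of_div_le one_pos hq
    ((hadm i).trans (exponentInv_anti hq hδ (Finset.subset_univ S) i))

theorem MixedNormBound.append_child [Fintype ι] (hQ : LabelsInjective Q) (hq : 4 < q) (hδ : 0 < δ)
    (hadm : ∀ i, 1 / q ≤ exponentInv Q q δ Finset.univ i) {A B : List ι} {l c : ι}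
    (hnodup : (A ++ l :: B).Nodup) (hsq : SquaresFirst Q (A ++ l :: B))
    (hc : (Q c).parent = some l) (hcL : c ∉ A ++ l :: B)
    (hpar : ∀ a ∈ A ++ l :: B, ∀ i, (Q a).parent = some i → i ∈ A ++ [l])
    (hL : MixedNormBound Q q (A ++ l :: B) fun i =>
      (exponentInv Q q δ (A ++ l :: B).toFinset i)⁻¹) :
    MixedNormBound Q q (A ++ l :: B ++ [c]) fun i =>
      (exponentInv Q q δ (A ++ l :: B ++ [c]).toFinset i)⁻¹ := by
  have hq0 : 0 < q := by linarith
  obtain ⟨j, hQc⟩ : ∃ j, Q c = product l j := by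
    cases hQc : Q c <;> simp_all [parent]
  have hpartner : partner Q c = some l := by rw [partner, hQc]
  have hinsert : (A ++ l :: B ++ [c]).toFinset = insert c (A ++ l :: B).toFinset := by
    rw [List.toFinset_append, Finset.union_comm]; rfl
  rw [hinsert]
  set S := (A ++ l :: B).toFinset with hS
  have hp := inv_exponentInv_pos_and_le hq0 hδ.le hadm
  have hl : exponentInv Q q δ (insert c S) l = exponentInv Q q δ S l - 1 / q - δ :=
    exponentInv_insert_of_eq (by simpa only [hS, List.mem_toFinset] using hcL) hpartner
  have hladm : 1 / q ≤ exponentInv Q q δ (insert c S) l :=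
    (hadm l).trans (exponentInv_anti hq0 hδ.le (Finset.subset_univ _) l)
  have hchildless : ∀ i ∉ A ++ [l], ∀ a ∈ S, (Q a).parent ≠ some i := fun i hi a ha h =>
    hi (hpar a (List.mem_toFinset.1 ha) i h)
  have hcc : ∀ a ∈ insert c S, (Q a).parent ≠ some c := by
    grind
  refine hL.append_product hQc (by grind) (by grind) (disjoint_freq_freqs hQ hcL) hq
    (fun i _ => hp S i) (fun i hi => ?_) (hp S l).1 ?_ (fun i hi => ?_) (hp (insert c S) l).1 ?_ ?_
  · refine inv_pos_and_inv_le_of_div_le two_pos hq0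
      (two_div_le_exponentInv_of_childless hq hδ hadm (hchildless i (by grind)) hQc ?_)
    exact List.rel_of_pairwise_cons (List.pairwise_append.1 hsq).2.1 hi
  · have hSl : 2 / q < exponentInv Q q δ S l := by
      linarith [show 2 / q = 1 / q + 1 / q by ring]
    rwa [← lt_div_iff₀' two_pos, inv_lt_comm₀ (inv_pos.1 (hp S l).1) (by positivity), inv_div]
  · rw [exponentInv_insert_of_ne (by grind)]
  · simp only [one_div, inv_inv] at hl ⊢
    linarith
  · rw [one_div, inv_inv, exponentInv_product hQc hcc, sub_add_cancel]

theorem mixedNormBound_of_isBreadthFirst [Fintype ι] (hQ : LabelsInjective Q)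
    (hq : 4 < q) (hδ : 0 < δ) (hadm : ∀ i, 1 / q ≤ exponentInv Q q δ Finset.univ i)
    (hR : R.Nodup) (hroots : ∀ i ∈ R, (Q i).parent = none) (hsq : SquaresFirst Q R)
    (hL : IsBreadthFirst (fun i => (Q i).parent) R L) :
    MixedNormBound Q q L fun i => (exponentInv Q q δ L.toFinset i)⁻¹ := by
  suffices SquaresFirst Q L ∧
      MixedNormBound Q q L fun i => (exponentInv Q q δ L.toFinset i)⁻¹ from this.2
  induction hL with
  | roots =>
    exact ⟨hsq, mixedNormBound_roots hQ hq hδ hR hroots fun i _ =>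
      (hadm i).trans (exponentInv_anti (by linarith) hδ.le (Finset.subset_univ _) i)⟩
  | @child A B l c h hc hcL hpar ih =>
    refine ⟨List.pairwise_append.2 ⟨ih.1, List.pairwise_singleton _ _, fun a _ c' hc' => ?_⟩,
      ih.2.append_child hQ hq hδ hadm (h.nodup hR) ih.1 hc hcL hpar⟩
    rintro ⟨j, hj⟩
    simp_all [parent]

end BreadthFirstBound

theorem exists_isBreadthFirst_forall_mem {ι J : Type*} [Finite ι]
    (Q : ι → QuadMonomial ι J) (hwf : WellFounded fun l i => (Q i).parent = some l) :
    ∃ R L : List ι, R.Nodup ∧ (∀ i ∈ R, (Q i).parent = none) ∧ SquaresFirst Q R ∧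
      IsBreadthFirst (fun i => (Q i).parent) R L ∧ ∀ i, i ∈ L := by
  classical
  cases nonempty_fintype ι
  set A := (Finset.univ.filter fun i => ∃ j, Q i = square j).toList with hA
  set B := (Finset.univ.filter fun i => Q i = linear).toList with hB
  have hroots : ∀ i, i ∈ A ++ B ↔ (Q i).parent = none := fun i => by
    cases h : Q i <;> simp [hA, hB, h, parent]
  have hnodup : (A ++ B).Nodup := by
    refine (Finset.nodup_toList _).append (Finset.nodup_toList _) fun i hiA hiB => ?_
    simp_all
  have hsquare : ∀ i ∈ A, ∃ j, Q i = square j := by simp [hA]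
  have hlinear : ∀ i ∈ B, ∀ j, Q i ≠ square j := by simp_all
  obtain ⟨L, hL, hmem⟩ := IsBreadthFirst.exists_forall_mem hnodup hroots hwf
  exact ⟨A ++ B, L, hnodup, fun i => (hroots i).1, List.pairwise_append.2
    ⟨List.pairwise_of_forall_mem_list fun i hi _ _ _ => hsquare i hi,
      List.pairwise_of_forall_mem_list fun _ _ i hi ⟨j, hj⟩ => absurd hj (hlinear i hi j),
      fun i hi _ _ _ => hsquare i hi⟩, hL, hmem⟩

end QuadMonomial

/-! ### The extension operator of a monomial system -/

theorem measurePreserving_update {ι : Type*} [Fintype ι] [DecidableEq ι] {X : ι → Type*}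
    [∀ i, MeasurableSpace (X i)] (μ : ∀ i, Measure (X i)) [∀ i, IsProbabilityMeasure (μ i)]
    (c : ι) :
    MeasurePreserving (fun w : X c × (∀ i, X i) => Function.update w.2 c w.1)
      ((μ c).prod (Measure.pi μ)) (Measure.pi μ) := by
  have hmeas : Measurable fun w : X c × (∀ i, X i) => Function.update w.2 c w.1 :=
    measurable_update'.comp measurable_swap
  refine ⟨hmeas, (Measure.pi_eq fun s hs => ?_).symm⟩
  have hpre : (fun w : X c × (∀ i, X i) => Function.update w.2 c w.1) ⁻¹' Set.univ.pi s =
      s c ×ˢ Set.univ.pi (Function.update s c Set.univ) := by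
    ext w
    simp only [Set.mem_preimage, Set.mem_univ_pi, Set.mem_prod]
    refine ⟨fun h => ⟨by simpa using h c, fun i => ?_⟩, fun h i => ?_⟩ <;>
      obtain rfl | hi := eq_or_ne i c
    · simp
    · simpa [hi] using h i
    · simpa using h.1
    · simpa [hi] using h.2 i
  rw [Measure.map_apply hmeas (.univ_pi hs), hpre, Measure.prod_prod, Measure.pi_pi,
    ← Finset.mul_prod_erase _ _ (Finset.mem_univ c),
    ← Finset.mul_prod_erase _ (fun i => μ i (s i)) (Finset.mem_univ c)]
  simp only [Function.update_self, measure_univ, one_mul]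
  congr 1
  exact Finset.prod_congr rfl fun i hi => by rw [Function.update_of_ne (Finset.ne_of_mem_erase hi)]

/-- The point `ξ` with the coordinates in the list `L` replaced by those of `ω`. -/
def replaceOn {ι : Type*} [DecidableEq ι] (L : List ι) (ω ξ : ι → ℝ) : ι → ℝ :=
  fun i => if i ∈ L then ω i else ξ i

section ReplaceOn

variable {ι : Type*} [DecidableEq ι] {L : List ι} {c : ι}

theorem replaceOn_cons_update (hc : c ∉ L) (ω ξ : ι → ℝ) (s : ℝ) :
    replaceOn (c :: L) (Function.update ω c s) ξ = replaceOn L ω (Function.update ξ c s) := by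
  ext i
  obtain rfl | hi := eq_or_ne i c
  · simp [replaceOn, hc]
  · simp [replaceOn, hi]

theorem measurable_replaceOn (L : List ι) (ξ : ι → ℝ) : Measurable fun ω => replaceOn L ω ξ :=
  measurable_pi_lambda _ fun i => by unfold replaceOn; split_ifs <;> fun_prop

end ReplaceOn

namespace QuadMonomial

section IterOscInt

variable {ι J : Type*} {Q : ι → QuadMonomial ι J}

theorem phase_congr_right {i : ι} {ξ ξ' : ι → ℝ} (hi : ξ i = ξ' i)
    (hparent : ∀ l, (Q i).parent = some l → ξ l = ξ' l) (z : ι ⊕ J → ℝ) :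
    phase Q i z ξ = phase Q i z ξ' := by
  unfold phase
  rw [hi]
  cases hQ : Q i <;> simp_all [parent]

theorem measurable_sum_phase (L : List ι) (z : ι ⊕ J → ℝ) :
    Measurable fun ξ => (L.map fun i => phase Q i z ξ).sum := by
  induction L with
  | nil => exact measurable_const
  | cons i L ih =>
    simp only [List.map_cons, List.sum_cons]
    exact ((measurable_phase Q i).comp (measurable_const.prodMk measurable_id)).add ih

theorem iterOscInt_eq_integral [Fintype ι] [DecidableEq ι] {L : List ι} (hnodup : L.Nodup)
    (hpar : L.Pairwise fun i i' => (Q i).parent ≠ some i') (z : ι ⊕ J → ℝ) {g : (ι → ℝ) → ℂ}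
    (hg : BoundedMeasurable g) (ξ : ι → ℝ) :
    iterOscInt Q L z g ξ = ∫ ω, 𝐞 (L.map fun i => phase Q i z (replaceOn L ω ξ)).sum •
      g (replaceOn L ω ξ) ∂Measure.pi fun _ => unitVolume := by
  induction L generalizing ξ with
  | nil =>
    have hnil : ∀ ω, replaceOn [] ω ξ = ξ := fun ω => by ext; simp [replaceOn]
    simp [iterOscInt, hnil]
  | cons c L ih =>
    rw [List.nodup_cons] at hnodup
    rw [List.pairwise_cons] at hpar
    have hphase : ∀ ω s, phase Q c z (replaceOn L ω (Function.update ξ c s)) =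
        phase Q c z (Function.update ξ c s) := fun ω s =>
      phase_congr_right (if_neg hnodup.1)
        (fun l hl => if_neg fun hlL => hpar.1 l hlL hl) z
    have hF : BoundedMeasurable fun ω =>
        𝐞 (List.map (fun i => phase Q i z (replaceOn (c :: L) ω ξ)) (c :: L)).sum •
          g (replaceOn (c :: L) ω ξ) :=
      (hg.comp (measurable_replaceOn _ ξ)).circle_smul
        ((measurable_sum_phase (c :: L) z).comp (measurable_replaceOn _ ξ))
    have hupdate := measurePreserving_update (fun _ : ι => unitVolume) c
    rw [← hupdate.map_eq, integral_map hupdate.aemeasurable hF.measurable.aestronglyMeasurable,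
      integral_prod _ ((hF.comp hupdate.measurable).integrable _)]
    simp only [replaceOn_cons_update hnodup.1, List.map_cons, List.sum_cons, hphase,
      AddChar.map_add_eq_mul, mul_smul]
    change ∫ s, 𝐞 (phase Q c z (Function.update ξ c s)) • iterOscInt Q L z g (Function.update ξ c s)
      ∂unitVolume = _
    congr 1 with s
    rw [ih hnodup.2 hpar.2]
    simp only [Circle.smul_def, smul_eq_mul, integral_const_mul]

end IterOscInt

section Extension

variable {ι J : Type*} [Fintype ι] {Q : ι → QuadMonomial ι J}

/-- The extension operator of a system of quadratic monomials, with the variables ranging over the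
unit cube. -/
noncomputable def extension (Q : ι → QuadMonomial ι J) (g : (ι → ℝ) → ℂ) (z : ι ⊕ J → ℝ) : ℂ :=
  ∫ ξ, 𝐞 (∑ i, phase Q i z ξ) • g ξ ∂Measure.pi fun _ => unitVolume

theorem iterOscInt_eq_extension [DecidableEq ι] {L : List ι} (hnodup : L.Nodup)
    (hpar : L.Pairwise fun i i' => (Q i).parent ≠ some i') (hmem : ∀ i, i ∈ L) {g : (ι → ℝ) → ℂ}
    (hg : BoundedMeasurable g) (z : ι ⊕ J → ℝ) (ξ : ι → ℝ) :
    iterOscInt Q L z g ξ = extension Q g z := by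
  have hreplace : ∀ ω, replaceOn L ω ξ = ω := fun ω => funext fun i => if_pos (hmem i)
  have hL : L.toFinset = Finset.univ := by ext; simp [hmem]
  rw [iterOscInt_eq_integral hnodup hpar z hg, extension]
  simp only [hreplace, ← List.sum_toFinset _ hnodup, hL]

theorem measurable_extension {g : (ι → ℝ) → ℂ} (hg : Measurable g) :
    Measurable (extension Q g) :=
  measurable_integral_circle_smul
    (u := fun w : (ι ⊕ J → ℝ) × (ι → ℝ) => ∑ i, phase Q i w.1 w.2) (f := fun w => g w.2)
    (Finset.measurable_sum _ fun i _ => measurable_phase Q i) (hg.comp measurable_snd)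

variable [DecidableEq ι] [DecidableEq J]

theorem exists_pos_le_exponentInv {P q : ℝ}
    (h : ∀ i, 1 / P + (multiplicity Q Finset.univ i + (freq Q i).card) / q < 1) :
    ∃ δ, 0 < δ ∧ ∀ i, 1 / P ≤ exponentInv Q q δ Finset.univ i := by
  have hlim : ∀ᶠ δ in 𝓝[>] (0 : ℝ), ∀ i, 1 / P < exponentInv Q q δ Finset.univ i := by
    refine eventually_all.2 fun i => Tendsto.eventually_const_lt
      (v := exponentInv Q q 0 Finset.univ i) ?_ ?_
    · rw [exponentInv]; linarith [h i]
    · refine (Continuous.tendsto ?_ 0).mono_left nhdsWithin_le_nhds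
      unfold exponentInv
      fun_prop
  obtain ⟨δ, hδ, hδpos⟩ := (hlim.and self_mem_nhdsWithin).exists
  exact ⟨δ, hδpos, fun i => (hδ i).le⟩

variable [Fintype J]

theorem freqs_eq_univ (hlabel : ∀ j, ∃ i, (Q i).label = some j) {L : List ι}
    (hmem : ∀ i, i ∈ L) : freqs Q L = Finset.univ := by
  ext (i | j)
  · simp [freqs, freq, hmem]
  · simpa [freqs, freq, hmem] using hlabel j

theorem eLpNorm'_extension_le (hQ : LabelsInjective Q) (hlabel : ∀ j, ∃ i, (Q i).label = some j)
    (hwf : WellFounded fun l i => (Q i).parent = some l) {P q : ℝ} (hP : 0 < P) (hPq : P ≤ q)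
    (hq : 4 < q) (h : ∀ i, 1 / P + (multiplicity Q Finset.univ i + (freq Q i).card) / q < 1) :
    ∃ C : ℝ≥0∞, C ≠ ∞ ∧ ∀ g : (ι → ℝ) → ℂ, BoundedMeasurable g →
      eLpNorm' (extension Q g) q volume ≤
        C * eLpNorm' g P (Measure.pi fun _ => unitVolume) := by
  obtain ⟨δ, hδ, hδP⟩ := exists_pos_le_exponentInv h
  have hadm : ∀ i, 1 / q ≤ exponentInv Q q δ Finset.univ i := fun i =>
    (one_div_le_one_div_of_le hP hPq).trans (hδP i)
  obtain ⟨R, L, hR, hroots, hsq, hL, hmem⟩ := exists_isBreadthFirst_forall_mem Q hwf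
  obtain ⟨C, hC, hbound⟩ := mixedNormBound_of_isBreadthFirst hQ hq hδ hadm hR hroots hsq hL
  have hLuniv : L.toFinset = Finset.univ := by ext; simp [hmem]
  have hexp := inv_exponentInv_pos_and_le (by linarith : 0 < q) hδ.le hadm Finset.univ
  refine ⟨C, hC, fun g hg => ?_⟩
  have hg_bound := hbound g hg 0 0
  simp only [freqs_eq_univ hlabel hmem, lmarginal_univ, hLuniv,
    iterOscInt_eq_extension (hL.nodup hR) (hL.parents_precede hroots) hmem hg] at hg_bound
  refine hg_bound.trans ?_
  gcongr
  refine (mixedNorm_le_lmarginal (fun i _ => (hexp i).1) hP (fun i _ => ?_) (hL.nodup hR)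
    hg.measurable.enorm 0).trans_eq ?_
  · exact inv_le_of_inv_le₀ hP (by simpa using hδP i)
  · rw [hLuniv, lmarginal_univ, eLpNorm']

end Extension

end QuadMonomial

/-! ### Systems of products of two variables -/

namespace QuadMonomial

section OfProducts

variable {ι J : Type*} [DecidableEq ι] {u v : J → ι}

open scoped Classical in
/-- The system of the monomials `ξ (u j) * ξ (v j)`, the form `j` being attached to the variable
`v j`; meaningful for injective `v`. -/
noncomputable def ofProducts (u v : J → ι) (i : ι) : QuadMonomial ι J :=
  if h : ∃ j, v j = i then
    if u h.choose = i then square h.choose else product (u h.choose) h.choose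
  else linear

theorem ofProducts_apply (hv : Function.Injective v) (j : J) :
    ofProducts u v (v j) = if u j = v j then square j else product (u j) j := by
  have h : ∃ j', v j' = v j := ⟨j, rfl⟩
  rw [ofProducts, dif_pos h, hv h.choose_spec]

theorem ofProducts_of_notMem_range {i : ι} (hi : i ∉ Set.range v) :
    ofProducts u v i = linear :=
  dif_neg hi

theorem label_ofProducts_eq_some_iff (hv : Function.Injective v) {i : ι} {j : J} :
    (ofProducts u v i).label = some j ↔ v j = i := by
  by_cases hi : i ∈ Set.range v
  · obtain ⟨j', rfl⟩ := hi
    rw [ofProducts_apply hv, hv.eq_iff, eq_comm (a := j)]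
    split_ifs <;> simp [label]
  · rw [ofProducts_of_notMem_range hi]
    simpa [label] using fun h => hi ⟨j, h⟩

theorem labelsInjective_ofProducts (hv : Function.Injective v) :
    LabelsInjective (ofProducts u v) := fun _ _ _ hi hi' =>
  ((label_ofProducts_eq_some_iff hv).1 hi).symm.trans ((label_ofProducts_eq_some_iff hv).1 hi')

theorem partner_ofProducts_eq_some_iff (hv : Function.Injective v) {i l : ι} :
    partner (ofProducts u v) i = some l ↔ ∃ j, v j = i ∧ u j = l := by
  by_cases hi : i ∈ Set.range v
  · obtain ⟨j, rfl⟩ := hi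
    simp only [partner, ofProducts_apply hv, hv.eq_iff, exists_eq_left]
    split_ifs with h <;> simp [h]
  · simp only [partner, ofProducts_of_notMem_range hi, reduceCtorEq, false_iff]
    rintro ⟨j, hj, -⟩
    exact hi ⟨j, hj⟩

theorem parent_ofProducts_lt [LT ι] (hv : Function.Injective v) (huv : ∀ j, u j ≠ v j → u j < v j)
    {i l : ι} (h : (ofProducts u v i).parent = some l) : l < i := by
  by_cases hi : i ∈ Set.range v
  · obtain ⟨j, rfl⟩ := hi
    rw [ofProducts_apply hv] at h
    split_ifs at h with huvj
    · simp [parent] at h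
    · obtain rfl : u j = l := by simpa [parent] using h
      exact huv j huvj
  · simp [ofProducts_of_notMem_range hi, parent] at h

variable [Fintype J]

theorem card_freq_ofProducts [DecidableEq J] (hv : Function.Injective v) (i : ι) :
    (freq (ofProducts u v) i).card = (Finset.univ.filter fun j => v j = i).card + 1 := by
  have hlabel : (ofProducts u v i).label.toFinset = Finset.univ.filter fun j => v j = i := by
    ext j
    simp [label_ofProducts_eq_some_iff hv]
  rw [freq, Finset.card_insert_of_notMem (by simp), Finset.card_map, hlabel]

variable [Fintype ι]

theorem multiplicity_ofProducts (hv : Function.Injective v) (i : ι) :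
    multiplicity (ofProducts u v) Finset.univ i = (Finset.univ.filter fun j => u j = i).card := by
  rw [multiplicity, ← Finset.card_image_of_injective _ hv]
  congr 1
  ext a
  simp [partner_ofProducts_eq_some_iff hv, and_comm]

theorem sum_phase_ofProducts (hv : Function.Injective v) (z : ι ⊕ J → ℝ) (ξ : ι → ℝ) :
    ∑ i, phase (ofProducts u v) i z ξ =
      ∑ i, z (.inl i) * ξ i + ∑ j, z (.inr j) * (ξ (u j) * ξ (v j)) := by
  simp only [phase, Finset.sum_add_distrib, add_right_inj]
  refine (Fintype.sum_of_injective v hv _ _ (fun i hi => ?_) fun j => ?_).symm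
  · rw [ofProducts_of_notMem_range hi]
  · rw [ofProducts_apply hv]
    split_ifs with h
    · simp only [h, sq]
    · rfl

end OfProducts

end QuadMonomial

/-! ### The extension operator on the unit cube -/

section UnitCube

theorem volume_restrict_Icc_zero_one {ι : Type*} [Fintype ι] :
    (volume : Measure (ι → ℝ)).restrict (Set.Icc 0 1) = Measure.pi fun _ => unitVolume := by
  rw [← Set.pi_univ_Icc, volume_pi, Measure.restrict_pi_pi]
  rfl

theorem eLpNorm_pi_unitVolume_le {ι : Type*} [Fintype ι] {f : (ι → ℝ) → ℂ} (hf : Measurable f)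
    {p p' : ℝ≥0∞} (hp : p' ≤ p) :
    eLpNorm f p' (Measure.pi fun _ => unitVolume) ≤ eLpNorm f p volume := by
  refine (eLpNorm_le_eLpNorm_of_exponent_le hp hf.aestronglyMeasurable).trans ?_
  rw [← volume_restrict_Icc_zero_one]
  exact eLpNorm_mono_measure _ Measure.restrict_le_self

variable {d n : ℕ} {Q : (Fin d → ℝ) → Fin n → ℝ} {f : (Fin d → ℝ) → ℂ} {p q : ℝ≥0∞}

theorem extOp_eq_integral_circle (Q : (Fin d → ℝ) → Fin n → ℝ) (f : (Fin d → ℝ) → ℂ)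
    (x : Fin (d + n) → ℝ) :
    extOp d n Q f x = ∫ ξ, 𝐞 (∑ i, x (Fin.castAdd n i) * ξ i +
      ∑ j, x (Fin.natAdd d j) * Q ξ j) • f ξ ∂Measure.pi fun _ => unitVolume := by
  rw [extOp, volume_restrict_Icc_zero_one]
  congr 1 with ξ
  rw [Circle.smul_def, Real.fourierChar_apply, smul_eq_mul]
  push_cast
  ring_nf

theorem measurable_extOp (hQ : Measurable Q) (hf : Measurable f) : Measurable (extOp d n Q f) := by
  rw [funext (extOp_eq_integral_circle Q f)]
  exact measurable_integral_circle_smul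
    (u := fun w : (Fin (d + n) → ℝ) × (Fin d → ℝ) => ∑ i, w.1 (Fin.castAdd n i) * w.2 i +
      ∑ j, w.1 (Fin.natAdd d j) * Q w.2 j)
    (f := fun w => f w.2) (by fun_prop) (hf.comp measurable_snd)

theorem enorm_extOp_le (Q : (Fin d → ℝ) → Fin n → ℝ) (hf : Measurable f) (hp : 1 ≤ p)
    (x : Fin (d + n) → ℝ) : ‖extOp d n Q f x‖ₑ ≤ eLpNorm f p volume := by
  rw [extOp_eq_integral_circle]
  refine (enorm_integral_le_lintegral_enorm _).trans ?_
  simp only [← ofReal_norm, Circle.norm_smul]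
  simp only [ofReal_norm, ← eLpNorm_one_eq_lintegral_enorm]
  exact eLpNorm_pi_unitVolume_le hf hp

theorem boundedMeasurable_indicator_norm_le (hf : Measurable f) (m : ℕ) :
    BoundedMeasurable ({ξ | ‖f ξ‖ ≤ m}.indicator f) := by
  refine ⟨hf.indicator (measurableSet_le hf.norm measurable_const), m, fun ξ => ?_⟩
  rw [Set.indicator_apply]
  split_ifs with h
  exacts [h, by simp]

theorem tendsto_extOp_indicator_norm_le (hQ : Measurable Q) (hf : Measurable f)
    (hfi : Integrable f (Measure.pi fun _ => unitVolume)) (x : Fin (d + n) → ℝ) :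
    Tendsto (fun m : ℕ => extOp d n Q ({ξ | ‖f ξ‖ ≤ m}.indicator f) x) atTop
      (𝓝 (extOp d n Q f x)) := by
  simp only [extOp_eq_integral_circle]
  refine tendsto_integral_of_dominated_convergence (fun ξ => ‖f ξ‖) (fun m => ?_) hfi.norm
    (fun m => .of_forall fun ξ => ?_) (.of_forall fun ξ => ?_)
  · exact ((boundedMeasurable_indicator_norm_le hf m).circle_smul
      (by fun_prop)).measurable.aestronglyMeasurable
  · rw [Circle.norm_smul]
    exact norm_indicator_le_norm_self _ _
  · refine tendsto_const_nhds.congr' ?_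
    filter_upwards [eventually_ge_atTop ⌈‖f ξ‖⌉₊] with m hm
    rw [Set.indicator_of_mem (s := {ξ | ‖f ξ‖ ≤ m}) (Nat.ceil_le.1 hm)]

theorem eLpNorm_extOp_le_of_boundedMeasurable (hQ : Measurable Q) (hp : 1 ≤ p) {C : ℝ≥0∞}
    (hC : C ≠ 0) (h : ∀ g, BoundedMeasurable g →
      eLpNorm (extOp d n Q g) q volume ≤ C * eLpNorm g p volume) (hf : Measurable f) :
    eLpNorm (extOp d n Q f) q volume ≤ C * eLpNorm f p volume := by
  obtain hfp | hfp := eq_or_ne (eLpNorm f p volume) ∞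
  · simp [hfp, ENNReal.mul_top hC]
  have hfi : Integrable f (Measure.pi fun _ => unitVolume) := memLp_one_iff_integrable.1
    ⟨hf.aestronglyMeasurable, (eLpNorm_pi_unitVolume_le hf hp).trans_lt hfp.lt_top⟩
  refine (Lp.eLpNorm_lim_le_liminf_eLpNorm (fun m => (measurable_extOp hQ
    (boundedMeasurable_indicator_norm_le hf m).measurable).aestronglyMeasurable) _
    (.of_forall (tendsto_extOp_indicator_norm_le hQ hf hfi))).trans ?_
  refine liminf_le_of_frequently_le' (Frequently.of_forall fun m => ?_)
  refine (h _ (boundedMeasurable_indicator_norm_le hf m)).trans ?_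
  gcongr
  exact eLpNorm_mono fun ξ => norm_indicator_le_norm_self _ _

end UnitCube

namespace QuadMonomial

section Products

variable {d n N : ℕ} {u v : Fin n → Fin d} {p q : ℝ≥0∞}

theorem eLpNorm_extOp_eq_eLpNorm_extension (hv : Function.Injective v) {f : (Fin d → ℝ) → ℂ}
    (hf : Measurable f) :
    eLpNorm (extOp d n (fun ξ j => ξ (u j) * ξ (v j)) f) q volume =
      eLpNorm (extension (ofProducts u v) f) q volume := by
  have hreindex := volume_preserving_arrowCongr' (finSumFinEquiv (m := d) (n := n)).symm
    (MeasurableEquiv.refl ℝ) (.id _)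
  rw [← eLpNorm_comp_measurePreserving
    (measurable_extension hf).aestronglyMeasurable hreindex]
  congr 1 with x
  rw [extOp_eq_integral_circle, Function.comp_apply, extension]
  simp only [sum_phase_ofProducts hv]
  rfl

theorem one_div_toReal_min_add_lt_one (hp : 1 ≤ p) (hN : 1 ≤ N) (hNq : (N : ℝ≥0∞) < q)
    (h : 1 / p + ((N : ℝ≥0∞) - 1) / q < 1) :
    1 / (min p q).toReal + ((N : ℝ) - 1) / q.toReal < 1 := by
  have hq0 : q ≠ 0 := (pos_of_gt hNq).ne'
  have hp0 : p ≠ 0 := (one_pos.trans_le hp).ne'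
  have hmin : 1 / min p q + ((N : ℝ≥0∞) - 1) / q < 1 := by
    obtain hpq | hpq := min_choice p q
    · rwa [hpq]
    · rw [hpq, ENNReal.div_add_div_same, add_tsub_cancel_of_le (by exact_mod_cast hN)]
      exact ENNReal.div_lt_of_lt_mul (by rwa [one_mul])
  have hmin0 : 1 / min p q ≠ ∞ := by simp [hp0, hq0]
  have hdiv : ((N : ℝ≥0∞) - 1) / q ≠ ∞ := ENNReal.div_ne_top (by finiteness) hq0
  have := (ENNReal.toReal_lt_toReal (by finiteness) ENNReal.one_ne_top).2 hmin
  rwa [ENNReal.toReal_add hmin0 hdiv, ENNReal.toReal_div, ENNReal.toReal_div,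
    ENNReal.toReal_sub_of_le (by exact_mod_cast hN) (by simp), ENNReal.toReal_one,
    ENNReal.toReal_natCast] at this

theorem exists_eLpNorm_extOp_products_le (hv : Function.Injective v) (huv : ∀ j, u j ≤ v j)
    (hN4 : 4 ≤ N) (hN : ∀ i, (Finset.univ.filter fun j => u j = i).card +
      (Finset.univ.filter fun j => v j = i).card + 2 ≤ N)
    (hp : 1 ≤ p) (hNq : (N : ℝ≥0∞) < q) (hpq : 1 / p + ((N : ℝ≥0∞) - 1) / q < 1) :
    ∃ C : ℝ≥0∞, C < ∞ ∧ ∀ f : (Fin d → ℝ) → ℂ, Measurable f →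
      eLpNorm (extOp d n (fun ξ j => ξ (u j) * ξ (v j)) f) q volume ≤ C * eLpNorm f p volume := by
  obtain rfl | hq := eq_or_ne q ∞
  · refine ⟨1, ENNReal.one_lt_top, fun f hf => ?_⟩
    rw [one_mul, eLpNorm_exponent_top]
    exact eLpNormEssSup_le_of_ae_enorm_bound (.of_forall (enorm_extOp_le _ hf hp))
  have hq0 : q ≠ 0 := (pos_of_gt hNq).ne'
  have hmin0 : min p q ≠ 0 := (lt_min (one_pos.trans_le hp) hq0.bot_lt).ne'
  have hmin : min p q ≠ ∞ := (min_lt_of_right_lt hq.lt_top).ne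
  have hNr : (N : ℝ) < q.toReal := by simpa using (ENNReal.toReal_lt_toReal (by simp) hq).2 hNq
  have hN4r : (4 : ℝ) ≤ N := by exact_mod_cast hN4
  have hexp : ∀ i, 1 / (min p q).toReal + (multiplicity (ofProducts u v) Finset.univ i +
      (freq (ofProducts u v) i).card) / q.toReal < 1 := fun i => by
    refine lt_of_le_of_lt ?_ (one_div_toReal_min_add_lt_one hp (by omega) hNq hpq)
    have hNi : ((_ + _ + 2 : ℕ) : ℝ) ≤ N := Nat.cast_le.2 (hN i)
    rw [multiplicity_ofProducts hv, card_freq_ofProducts hv]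
    gcongr
    push_cast at hNi ⊢
    linarith
  obtain ⟨C, hC, hbound⟩ := eLpNorm'_extension_le
    (labelsInjective_ofProducts hv)
    (fun j => ⟨v j, (label_ofProducts_eq_some_iff hv).2 rfl⟩)
    (Subrelation.wf (parent_ofProducts_lt hv fun j => (huv j).lt_of_ne) wellFounded_lt)
    (ENNReal.toReal_pos hmin0 hmin) (ENNReal.toReal_mono hq (min_le_right _ _)) (by linarith) hexp
  refine ⟨C + 1, by finiteness, fun f hf => ?_⟩
  refine eLpNorm_extOp_le_of_boundedMeasurable (by fun_prop) hp (by simp) (fun g hg => ?_) hf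
  rw [eLpNorm_extOp_eq_eLpNorm_extension hv hg.measurable, eLpNorm_eq_eLpNorm' hq0 hq]
  refine (hbound g hg).trans (mul_le_mul' le_self_add ?_)
  rw [← eLpNorm_eq_eLpNorm' hmin0 hmin]
  exact eLpNorm_pi_unitVolume_le hg.measurable (min_le_left _ _)

end Products

end QuadMonomial

/-! ### Forms with `η` initial squares -/

section InitialSquares

variable {n k η : ℕ} {lam : Fin n → Fin (n + k)}

/-- The variable `ξ_(lam j)` of the form `j`, or `ξ_j` for the first `η` forms, which are
squares. -/
def lowerIndex (η : ℕ) (lam : Fin n → Fin (n + k)) (j : Fin n) : Fin (n + k) :=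
  if (j : ℕ) < η then j.castAdd k else lam j

/-- The variable `ξ_(j+k)` of the form `j`, or `ξ_j` for the first `η` forms, which are squares. -/
def upperIndex (k η : ℕ) (j : Fin n) : Fin (n + k) :=
  if (j : ℕ) < η then j.castAdd k else j.addNat k

theorem upperIndex_injective (k η : ℕ) :
    Function.Injective (upperIndex k η : Fin n → Fin (n + k)) := fun i j h => by
  simp only [upperIndex, Fin.ext_iff] at h ⊢
  split_ifs at h <;> simp only [Fin.val_castAdd, Fin.val_addNat] at h <;> omega

theorem lowerIndex_le_upperIndex (hlam : ∀ j : Fin n, η ≤ (j : ℕ) → (lam j : ℕ) ≤ (j : ℕ) + k)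
    (j : Fin n) : lowerIndex η lam j ≤ upperIndex k η j := by
  unfold lowerIndex upperIndex
  split_ifs with h
  exacts [le_rfl, hlam j (not_lt.1 h)]

theorem card_lowerIndex_eq_le (i : Fin (n + k)) :
    (Finset.univ.filter fun j => lowerIndex η lam j = i).card ≤
      (Finset.univ.filter fun j : Fin n => η ≤ (j : ℕ) ∧ lam j = i).card +
        if (i : ℕ) < η then 1 else 0 := by
  have hsplit : (Finset.univ.filter fun j => lowerIndex η lam j = i) ⊆
      (Finset.univ.filter fun j : Fin n => η ≤ (j : ℕ) ∧ lam j = i) ∪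
        Finset.univ.filter fun j : Fin n => (j : ℕ) < η ∧ j.castAdd k = i := fun j hj => by
    simp only [lowerIndex, Finset.mem_filter, Finset.mem_univ, true_and, Finset.mem_union] at hj ⊢
    grind
  refine (Finset.card_le_card hsplit).trans ((Finset.card_union_le _ _).trans ?_)
  gcongr
  split_ifs with hi
  · refine Finset.card_le_one.2 fun a ha b hb => ?_
    simp_all [Fin.ext_iff]
  · simp only [nonpos_iff_eq_zero, Finset.card_eq_zero, Finset.filter_eq_empty_iff]
    rintro j - ⟨hj, rfl⟩
    exact hi hj

theorem card_upperIndex_eq_le (i : Fin (n + k)) :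
    (Finset.univ.filter fun j : Fin n => upperIndex k η j = i).card ≤
      if η ≤ (i : ℕ) ∧ (i : ℕ) < η + k then 0 else 1 := by
  split_ifs with hi
  · simp only [nonpos_iff_eq_zero, Finset.card_eq_zero, Finset.filter_eq_empty_iff]
    rintro j - rfl
    unfold upperIndex at hi
    split_ifs at hi <;> simp at hi <;> omega
  · refine Finset.card_le_one.2 fun a ha b hb => upperIndex_injective k η ?_
    simp_all

theorem degree_add_two_le {w : Fin (n + k) → ℕ}
    (hw : ∀ i, w i = (Finset.univ.filter (fun j : Fin n => η ≤ (j : ℕ) ∧ lam j = i)).card)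
    {q2 : ℕ} (hq2 : q2 = max (max
      (((Finset.univ.filter (fun i : Fin (n + k) => (i : ℕ) < η)).sup w) + 4)
      (((Finset.univ.filter (fun i : Fin (n + k) =>
          η ≤ (i : ℕ) ∧ (i : ℕ) < η + k)).sup w) + 2))
      (((Finset.univ.filter (fun i : Fin (n + k) =>
          η + k ≤ (i : ℕ))).sup w) + 3)) (i : Fin (n + k)) :
    (Finset.univ.filter fun j => lowerIndex η lam j = i).card +
      (Finset.univ.filter fun j : Fin n => upperIndex k η j = i).card + 2 ≤ q2 := by
  have hlower := card_lowerIndex_eq_le (η := η) (lam := lam) i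
  have hupper := card_upperIndex_eq_le (η := η) i
  rw [← hw] at hlower
  have hsup : ∀ (P : Fin (n + k) → Prop) [DecidablePred P], P i →
      w i ≤ (Finset.univ.filter P).sup w := fun P _ hi => Finset.le_sup (by simpa using hi)
  obtain hi | hi | hi : (i : ℕ) < η ∨ (η ≤ (i : ℕ) ∧ (i : ℕ) < η + k) ∨ η + k ≤ (i : ℕ) := by omega
  · have := hsup (fun i => (i : ℕ) < η) hi
    split_ifs at hlower hupper <;> omega
  · have := hsup (fun i => η ≤ (i : ℕ) ∧ (i : ℕ) < η + k) hi
    split_ifs at hlower hupper <;> omega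
  · have := hsup (fun i => η + k ≤ (i : ℕ)) hi
    split_ifs at hlower hupper <;> omega

end InitialSquares

theorem statement5_general (n k η : ℕ)
    (lam : Fin n → Fin (n + k))
    (hlam : ∀ j : Fin n, η ≤ (j : ℕ) → (lam j : ℕ) ≤ (j : ℕ) + k)
    (w : Fin (n + k) → ℕ)
    (hw : ∀ i, w i = (Finset.univ.filter
      (fun j : Fin n => η ≤ (j : ℕ) ∧ lam j = i)).card)
    (q2 : ℕ)
    (hq2 : q2 = max (max
      (((Finset.univ.filter (fun i : Fin (n + k) => (i : ℕ) < η)).sup w) + 4)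
      (((Finset.univ.filter (fun i : Fin (n + k) =>
          η ≤ (i : ℕ) ∧ (i : ℕ) < η + k)).sup w) + 2))
      (((Finset.univ.filter (fun i : Fin (n + k) =>
          η + k ≤ (i : ℕ))).sup w) + 3))
    (p q : ℝ≥0∞) (hp : 1 ≤ p)
    (hq3 : (q2 : ℝ≥0∞) < q)
    (hpq : 1 / p + ((q2 : ℝ≥0∞) - 1) / q < 1) :
    ∃ C : ℝ≥0∞, C < ⊤ ∧
      ∀ f : (Fin (n + k) → ℝ) → ℂ, Measurable f →
        eLpNorm (extOp (n + k) n
          (fun ξ j =>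
            if (j : ℕ) < η then ξ (j.castAdd k) ^ 2 else ξ (lam j) * ξ (j.addNat k))
          f) q volume ≤
          C * eLpNorm f p volume := by
  have hforms : (fun (ξ : Fin (n + k) → ℝ) (j : Fin n) =>
      if (j : ℕ) < η then ξ (j.castAdd k) ^ 2 else ξ (lam j) * ξ (j.addNat k)) =
      fun ξ j => ξ (lowerIndex η lam j) * ξ (upperIndex k η j) := by
    ext ξ j
    unfold lowerIndex upperIndex
    split_ifs
    exacts [sq _, rfl]
  rw [hforms]
  exact QuadMonomial.exists_eLpNorm_extOp_products_le (upperIndex_injective k η)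
    (lowerIndex_le_upperIndex hlam) (by omega) (degree_add_two_le hw hq2) hp hq3 hpq

/-- case (4) of the main theorem, `d = n + k`, monomial with
`η` initial squares. Indices are 0-indexed: the `n` forms are
`Q_j = ξ_j²` for `j < η` and `Q_j = ξ_{lam j} ξ_{j+k}` for `η ≤ j < n`,
with `(lam j : ℕ) ≤ j + k` for `η ≤ j` (the 1-indexed condition
`λ_j ≤ j` for `η+1+k ≤ j ≤ n+k`), and `w i` counts the `j ≥ η` with
`lam j = i`. -/
theorem statement5 (n k η : ℕ) (hn : 2 ≤ n) (hk : 1 ≤ k)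
    (hη1 : 1 ≤ η) (hηn : η < n)
    (lam : Fin n → Fin (n + k))
    (hlam : ∀ j : Fin n, η ≤ (j : ℕ) → (lam j : ℕ) ≤ (j : ℕ) + k)
    (w : Fin (n + k) → ℕ)
    (hw : ∀ i, w i = (Finset.univ.filter
      (fun j : Fin n => η ≤ (j : ℕ) ∧ lam j = i)).card)
    (hwpos : ∀ i : Fin (n + k), η ≤ (i : ℕ) → (i : ℕ) < η + k → 1 ≤ w i)
    (q2 : ℕ)
    (hq2 : q2 = max (max
      (((Finset.univ.filter (fun i : Fin (n + k) => (i : ℕ) < η)).sup w) + 4)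
      (((Finset.univ.filter (fun i : Fin (n + k) =>
          η ≤ (i : ℕ) ∧ (i : ℕ) < η + k)).sup w) + 2))
      (((Finset.univ.filter (fun i : Fin (n + k) =>
          η + k ≤ (i : ℕ))).sup w) + 3))
    (p q : ℝ≥0∞) (hp : 1 ≤ p) (hq : 1 ≤ q)
    (hq3 : (q2 : ℝ≥0∞) < q)
    (hpq : 1 / p + ((q2 : ℝ≥0∞) - 1) / q < 1) :
    ∃ C : ℝ≥0∞, C < ⊤ ∧
      ∀ f : (Fin (n + k) → ℝ) → ℂ, Measurable f →
        Function.support f ⊆ Set.Icc 0 1 →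
        eLpNorm (extOp (n + k) n
          (fun ξ j =>
            if (j : ℕ) < η then ξ ⟨(j : ℕ), by have := j.isLt; omega⟩ ^ 2
            else ξ (lam j) * ξ ⟨(j : ℕ) + k, by have := j.isLt; omega⟩)
          f) q volume ≤
          C * eLpNorm f p volume :=
  let ⟨C, hC, hbound⟩ := statement5_general n k η lam hlam w hw q2 hq2 p q hp hq3 hpq
  ⟨C, hC, fun f hf _ => hbound f hf⟩
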